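/- Let T > 0, β ∈ (0,1), v = (a,b,0) and v̄ = (ā,b̄,0) in B(R,λ,1), f, f̄ ∈ C^{1,1/2}(ℝ×[0,T]), and u_0, ū_0 Lipschitz continuous bounded functions on ℝ. If u and ū are the bounded solutions in C^{2,1}(ℝ×(0,T]) ∩ C^{1,1/2}(ℝ×[0,T]) of L_{[v]}u = f on ℝ×(0,T] with u(·,0) = u_0, and L_{[v̄]}ū = f̄ on ℝ×(0,T] with ū(·,0) = ū_0, respectively, then there is a constant K = K(R,λ,T,‖u_0‖_1), depending continuously on T, such that ‖u − ū‖_{1,1/2} ≤ K[ ‖v−v̄‖_{1,1/2} + ‖v−v̄‖_{1,1/2}^β + ‖u_0−ū_0‖_1 + T^{1/2}(‖f‖_{1,1/2}+1)(‖f−f̄‖_{1,1/2} + ‖v−v̄‖_{1,1/2} + ‖v−v̄‖_{1,1/2}^β) ]. -/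

import Mathlib

/-!
Everything is deduced from the maximum principle. The difference `w = u - ū` solves the barred
equation with source `f - f̄ + (a - ā) u_xx - (b - b̄) u_x`, so the estimate rests on two facts.

* A solution whose source is at most `G / √t` lies in `C^{1,1/2}`, with norm controlled linearly by
  `G` and the initial datum. The Lipschitz bound comes from doubling the space variable, with a
  barrier whose concave part absorbs the singularity of the source at `t = 0`; the modulus of
  continuity in time follows by comparison with parabolas.
* The second derivative of `u` is at most `C / √t`. The mixed second difference
  `(y, z, t) ↦ Δ_y Δ_z u(x₀, t)` vanishes for `y = 0` and for `z = 0`, and comparing it with `y z`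
  times an affine function bounds `u_xx(x₀, t₀)` by the Lipschitz constant of `u` divided by the
  size of a box around `(x₀, t₀)`, plus a small multiple of the supremum of `|u_xx|` over the box.
  The last term is absorbed if `|u_xx|` at most doubles on the box, as it does around a point at
  which `√t |u_xx|`, suitably localized, is maximal.

Hence the source of `w` is at most `G / √t` with `G` linear in the distances between the data. The
Hölder powers of `‖v - v̄‖` are not produced by this route. The singular source costs a factor
`1 / √T`, because `‖v - v̄‖` enters `G` without the factor `√T` that the right-hand side carries.
-/

open MeasureTheory

noncomputable section

/-- Partial derivative in time of `u = u(x,t)`. -/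
def pdT (u : ℝ → ℝ → ℝ) (x t : ℝ) : ℝ := deriv (fun s => u x s) t

/-- Partial derivative in space of `u = u(x,t)`. -/
def pdX (u : ℝ → ℝ → ℝ) (x t : ℝ) : ℝ := deriv (fun y => u y t) x

/-- Second partial derivative in space of `u = u(x,t)`. -/
def pdXX (u : ℝ → ℝ → ℝ) (x t : ℝ) : ℝ := deriv (fun y => pdX u y t) x

/-- The class `C^{α,α/2}(S)`. -/
def HolderClass (S : Set (ℝ × ℝ)) (α : ℝ) (u : ℝ → ℝ → ℝ) : Prop :=
  ∃ C : ℝ, (∀ p ∈ S, |u p.1 p.2| ≤ C) ∧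
    ∀ p ∈ S, ∀ q ∈ S,
      |u p.1 p.2 - u q.1 q.2| ≤ C * (|p.1 - q.1| ^ α + |p.2 - q.2| ^ (α / 2))

/-- The class `C^{2,1}(S)`. -/
def C21 (S : Set (ℝ × ℝ)) (u : ℝ → ℝ → ℝ) : Prop :=
  (∀ p ∈ S,
      DifferentiableAt ℝ (fun y => u y p.2) p.1 ∧
      DifferentiableAt ℝ (fun y => pdX u y p.2) p.1 ∧
      DifferentiableAt ℝ (fun s => u p.1 s) p.2) ∧
  ContinuousOn (fun p : ℝ × ℝ => u p.1 p.2) S ∧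
  ContinuousOn (fun p : ℝ × ℝ => pdX u p.1 p.2) S ∧
  ContinuousOn (fun p : ℝ × ℝ => pdXX u p.1 p.2) S ∧
  ContinuousOn (fun p : ℝ × ℝ => pdT u p.1 p.2) S

/-- The norm `‖u‖_{1,1/2}` on `C^{1,1/2}(ℝ×[0,T])`. -/
def norm11 (T : ℝ) (u : ℝ → ℝ → ℝ) : ℝ :=
  sSup {r : ℝ | ∃ x t, 0 ≤ t ∧ t ≤ T ∧ r = |u x t|} +
  sSup {r : ℝ | ∃ x t x' t', 0 ≤ t ∧ t ≤ T ∧ 0 ≤ t' ∧ t' ≤ T ∧ ¬(x = x' ∧ t = t') ∧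
    r = |u x t - u x' t'| / (|x - x'| + |t - t'| ^ (1/2 : ℝ))}

/-- The norm `‖g‖_1 = sup |g| + Lipschitz seminorm` for `g : ℝ → ℝ`. -/
def norm1 (g : ℝ → ℝ) : ℝ :=
  sSup {r : ℝ | ∃ x, r = |g x|} +
  sSup {r : ℝ | ∃ x x', x ≠ x' ∧ r = |g x - g x'| / |x - x'|}

/-- `u` lies in `C^{1,1/2}(ℝ×[0,T])` with sup bound `C1` and Lipschitz/Hölder constant `C2`. -/
def inC (T C1 C2 : ℝ) (u : ℝ → ℝ → ℝ) : Prop :=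
  (∀ x t, 0 ≤ t → t ≤ T → |u x t| ≤ C1) ∧
  ∀ x t x' t', 0 ≤ t → t ≤ T → 0 ≤ t' → t' ≤ T →
    |u x t - u x' t'| ≤ C2 * (|x - x'| + |t - t'| ^ (1/2 : ℝ))

/-- `v = (a,b,0) ∈ B(R,λ,1)`. -/
def memB (T R lam : ℝ) (a b : ℝ → ℝ → ℝ) : Prop :=
  (∀ x t, 0 ≤ t → t ≤ T → lam ≤ a x t) ∧
  (∃ C1 C2 : ℝ, 0 ≤ C1 ∧ 0 ≤ C2 ∧ C1 + C2 < R ∧ inC T C1 C2 a) ∧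
  (∃ C1 C2 : ℝ, 0 ≤ C1 ∧ 0 ≤ C2 ∧ C1 + C2 < R ∧ inC T C1 C2 b)

/-- `u` is a (bounded) solution in `C^{2,1}(ℝ×(0,T]) ∩ C^{1,1/2}(ℝ×[0,T])` of the Cauchy
problem `L_{[(a,b,0)]} u = u_t - a u_{xx} + b u_x = f` on `ℝ×(0,T]`, `u(·,0) = u₀`. -/
def IsSolLin (T : ℝ) (a b f : ℝ → ℝ → ℝ) (u0 : ℝ → ℝ) (u : ℝ → ℝ → ℝ) : Prop :=
  C21 {p : ℝ × ℝ | 0 < p.2 ∧ p.2 ≤ T} u ∧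
  HolderClass {p : ℝ × ℝ | 0 ≤ p.2 ∧ p.2 ≤ T} 1 u ∧
  (∀ x, u x 0 = u0 x) ∧
  (∀ x t, 0 < t → t ≤ T →
    pdT u x t - a x t * pdXX u x t + b x t * pdX u x t = f x t)

/-- The distance `‖v - v̄‖_{1,1/2}` between coefficient pairs `(a,b,0)`, `(ā,b̄,0)`. -/
def vDist (T : ℝ) (a b abar bbar : ℝ → ℝ → ℝ) : ℝ :=
  max (norm11 T (fun x t => a x t - abar x t)) (norm11 T (fun x t => b x t - bbar x t))

end

section Calculus

open Set Filter Topology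

variable {f f' g g' : ℝ → ℝ} {c d x : ℝ}

/-- `f'` is the derivative of `f` near `x`, and `f'` has derivative `c` at `x`. -/
def HasDeriv₂At (f f' : ℝ → ℝ) (c x : ℝ) : Prop :=
  (∀ᶠ y in 𝓝 x, HasDerivAt f (f' y) y) ∧ HasDerivAt f' c x

namespace HasDeriv₂At

theorem sub (hf : HasDeriv₂At f f' c x) (hg : HasDeriv₂At g g' d x) :
    HasDeriv₂At (fun y => f y - g y) (fun y => f' y - g' y) (c - d) x :=
  ⟨hf.1.mp (hg.1.mono fun _ hg hf => hf.sub hg), hf.2.sub hg.2⟩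

theorem neg (hf : HasDeriv₂At f f' c x) :
    HasDeriv₂At (fun y => -f y) (fun y => -f' y) (-c) x :=
  ⟨hf.1.mono fun _ hf => hf.neg, hf.2.neg⟩

theorem const_mul (k : ℝ) (hf : HasDeriv₂At f f' c x) :
    HasDeriv₂At (fun y => k * f y) (fun y => k * f' y) (k * c) x :=
  ⟨hf.1.mono fun _ hf => hf.const_mul k, hf.2.const_mul k⟩

theorem of_quadratic (p q r : ℝ) (hf : ∀ y, f y = p + q * y + r * y ^ 2) :
    HasDeriv₂At f (fun y => q + 2 * r * y) (2 * r) x := by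
  obtain rfl : f = fun y => p + q * y + r * y ^ 2 := funext hf
  refine ⟨.of_forall fun y => ?_, ?_⟩
  · refine ((((hasDerivAt_id y).const_mul q).const_add p).add
      (((hasDerivAt_id y).pow 2).const_mul r)).congr_deriv ?_
    simp only [id_eq]
    ring
  · simpa using ((hasDerivAt_id x).const_mul (2 * r)).const_add q

theorem const (p : ℝ) : HasDeriv₂At (fun _ => p) (fun _ => 0) 0 x := by
  simpa using of_quadratic (x := x) p 0 0 fun y => by ring

theorem comp_sub_const (k : ℝ) (hf : HasDeriv₂At f f' c (x - k)) :
    HasDeriv₂At (fun y => f (y - k)) (fun y => f' (y - k)) c x :=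
  ⟨((continuous_sub_right k).tendsto x |>.eventually hf.1).mono fun y hy =>
    hy.comp_sub_const y k, hf.2.comp_sub_const x k⟩

theorem comp_const_sub (k : ℝ) (hf : HasDeriv₂At f f' c (k - x)) :
    HasDeriv₂At (fun y => f (k - y)) (fun y => -f' (k - y)) c x := by
  refine ⟨((continuous_sub_left k).tendsto x |>.eventually hf.1).mono fun y hy =>
    hy.comp_const_sub k y, ?_⟩
  exact (hf.2.comp_const_sub k x).neg.congr_deriv (neg_neg c)

theorem deriv_eq_zero_of_isLocalMax (hf : HasDeriv₂At f f' c x) (hmax : IsLocalMax f x) :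
    f' x = 0 :=
  hmax.hasDerivAt_eq_zero hf.1.self_of_nhds

theorem nonpos_of_isLocalMax (hf : HasDeriv₂At f f' c x) (hmax : IsLocalMax f x) : c ≤ 0 := by
  by_contra! hc
  have hderiv : deriv f =ᶠ[𝓝 x] f' := hf.1.mono fun y hy => hy.deriv
  have hderiv₂ : deriv (deriv f) x = c := by rw [hderiv.deriv_eq, hf.2.deriv]
  have hmin : IsLocalMin f x := isLocalMin_of_deriv_deriv_pos (hderiv₂ ▸ hc)
    hmax.deriv_eq_zero hf.1.self_of_nhds.continuousAt
  -- a point that is both a local maximum and a local minimum is a point of local constancy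
  have hconst : f =ᶠ[𝓝 x] fun _ => f x := by
    filter_upwards [hmax, hmin] with y h₁ h₂ using le_antisymm h₁ h₂
  have hzero : deriv f =ᶠ[𝓝 x] fun _ => 0 := by simpa using hconst.deriv
  simp [hzero.deriv_eq, hc.ne] at hderiv₂

end HasDeriv₂At

theorem deriv_nonneg_of_eventually_le_left (hf : HasDerivAt f c x)
    (hmax : ∀ᶠ y in 𝓝[<] x, f y ≤ f x) : 0 ≤ c := by
  have hslope := (hasDerivWithinAt_iff_tendsto_slope' (by simp)).1
    (hf.hasDerivWithinAt (s := Iio x))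
  refine ge_of_tendsto hslope ?_
  filter_upwards [hmax, self_mem_nhdsWithin] with y hy hyx
  rw [slope_def_field]
  exact div_nonneg_of_nonpos (sub_nonpos.2 hy) (sub_nonpos.2 (le_of_lt hyx))

theorem deriv_le_of_eventually_le_mul (hf : HasDerivAt f c 0) (h₀ : f 0 = 0)
    (hle : ∀ᶠ y in 𝓝[>] 0, f y ≤ d * y) : c ≤ d := by
  have hslope := (hasDerivWithinAt_iff_tendsto_slope' (by simp)).1
    (hf.hasDerivWithinAt (s := Ioi 0))
  refine le_of_tendsto hslope ?_
  filter_upwards [hle, self_mem_nhdsWithin] with y hy hy₀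
  rwa [slope_def_field, h₀, sub_zero, sub_zero, div_le_iff₀ hy₀]

end Calculus

section MaximumPrinciple

open Set Filter Topology

variable {D : Set (ℝ × ℝ × ℝ)} {V : ℝ × ℝ × ℝ → ℝ} {R T x y t ε : ℝ}

/-- The slices of `D` in each of the two space variables are neighbourhoods of the point, and the
slice in time is a neighbourhood from the past: this is what comparison at a maximum needs. -/
def IsParabolicInterior (D : Set (ℝ × ℝ × ℝ)) (x y t : ℝ) : Prop :=
  (∀ᶠ x' in 𝓝 x, (x', y, t) ∈ D) ∧ (∀ᶠ y' in 𝓝 y, (x, y', t) ∈ D) ∧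
    ∀ᶠ s in 𝓝[<] t, (x, y, s) ∈ D

/-- `V_t ≤ α V_xx + β V_yy + b V_x + c V_y` at the point `(x, y, t)`, for some coefficients
`0 ≤ α, β ≤ R` and `|b|, |c| ≤ R`. -/
def IsSubsolutionAt (R : ℝ) (V : ℝ × ℝ × ℝ → ℝ) (x y t : ℝ) : Prop :=
  ∃ α ∈ Icc 0 R, ∃ β ∈ Icc 0 R, ∃ b c : ℝ, |b| ≤ R ∧ |c| ≤ R ∧
    ∃ (Vx Vy : ℝ → ℝ) (Vxx Vyy Vt : ℝ),
      HasDeriv₂At (fun x' => V (x', y, t)) Vx Vxx x ∧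
      HasDeriv₂At (fun y' => V (x, y', t)) Vy Vyy y ∧
      HasDerivAt (fun s => V (x, y, s)) Vt t ∧
      Vt ≤ α * Vxx + β * Vyy + b * Vx x + c * Vy y

/-- A strict supersolution, for all coefficients admitted by `IsSubsolutionAt R`, that tends to
infinity in space. -/
noncomputable def penalty (R : ℝ) (p : ℝ × ℝ × ℝ) : ℝ :=
  Real.exp ((6 * R + 1) * p.2.2) * (1 + p.1 ^ 2 + p.2.1 ^ 2)

theorem penalty_pos (R : ℝ) (p : ℝ × ℝ × ℝ) : 0 < penalty R p := by
  unfold penalty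
  positivity

theorem continuous_penalty (R : ℝ) : Continuous (penalty R) := by
  unfold penalty
  fun_prop

theorem penalty_rate_dominates (hR : 0 ≤ R) (x y : ℝ) :
    R * (4 + 2 * |x| + 2 * |y|) < (6 * R + 1) * (1 + x ^ 2 + y ^ 2) := by
  have hx : 2 * |x| ≤ 1 + x ^ 2 := by nlinarith [sq_nonneg (|x| - 1), sq_abs x]
  have hy : 2 * |y| ≤ 1 + y ^ 2 := by nlinarith [sq_nonneg (|y| - 1), sq_abs y]
  nlinarith [mul_le_mul_of_nonneg_left (add_le_add hx hy) hR, mul_nonneg hR (sq_nonneg x),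
    mul_nonneg hR (sq_nonneg y), sq_nonneg x, sq_nonneg y]

theorem IsSubsolutionAt.not_isMaxOn (hR : 0 ≤ R) (hε : 0 < ε) (hV : IsSubsolutionAt R V x y t)
    (hD : IsParabolicInterior D x y t) :
    ¬ IsMaxOn (fun p => V p - ε * penalty R p) D (x, y, t) := by
  intro hmax
  obtain ⟨α, hα, β, hβ, b, c, hb, hc, Vx, Vy, Vxx, Vyy, Vt, hx, hy, ht, hsub⟩ := hV
  set E := ε * Real.exp ((6 * R + 1) * t) with hE
  have hEpos : 0 < E := by positivity
  have hx' := hx.sub (.of_quadratic (f := fun x' => ε * penalty R (x', y, t))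
    (E * (1 + y ^ 2)) 0 E fun x' => by simp only [penalty, hE]; ring)
  have hy' := hy.sub (.of_quadratic (f := fun y' => ε * penalty R (x, y', t))
    (E * (1 + x ^ 2)) 0 E fun y' => by simp only [penalty, hE]; ring)
  have ht' := ht.sub (((((hasDerivAt_id t).const_mul (6 * R + 1)).exp).mul_const
    (1 + x ^ 2 + y ^ 2)).const_mul ε)
  have hxmax := hD.1.mono fun x' h => hmax h
  have hymax := hD.2.1.mono fun y' h => hmax h
  have hVx : Vx x = 2 * E * x := by
    linarith [hx'.deriv_eq_zero_of_isLocalMax hxmax]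
  have hVy : Vy y = 2 * E * y := by
    linarith [hy'.deriv_eq_zero_of_isLocalMax hymax]
  have hVxx := mul_le_mul_of_nonneg_left (sub_nonpos.1 (hx'.nonpos_of_isLocalMax hxmax)) hα.1
  have hVyy := mul_le_mul_of_nonneg_left (sub_nonpos.1 (hy'.nonpos_of_isLocalMax hymax)) hβ.1
  have hVt := deriv_nonneg_of_eventually_le_left ht' (hD.2.2.mono fun s h => hmax h)
  have hbx : b * x ≤ R * |x| := (le_abs_self _).trans (abs_mul b x ▸ by gcongr)
  have hcy : c * y ≤ R * |y| := (le_abs_self _).trans (abs_mul c y ▸ by gcongr)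
  have hrate := mul_lt_mul_of_pos_left (penalty_rate_dominates hR x y) hEpos
  simp only [id_eq, mul_one] at hVt
  rw [hVx, hVy] at hsub
  nlinarith [mul_le_mul_of_nonneg_left hbx hEpos.le, mul_le_mul_of_nonneg_left hcy hEpos.le,
    mul_le_mul_of_nonneg_left hα.2 hEpos.le, mul_le_mul_of_nonneg_left hβ.2 hEpos.le]

theorem exists_isMaxOn_sub_penalty (hR : 0 ≤ R) (hD : IsClosed D)
    (hDT : ∀ p ∈ D, p.2.2 ∈ Icc 0 T) (hV : ContinuousOn V D) (hbdd : BddAbove (V '' D))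
    (hε : 0 < ε) (hne : D.Nonempty) :
    ∃ p ∈ D, IsMaxOn (fun p => V p - ε * penalty R p) D p := by
  obtain ⟨p₀, hp₀⟩ := hne
  obtain ⟨C, hC⟩ := hbdd
  refine (hV.sub ((continuous_penalty R).const_mul ε).continuousOn).exists_isMaxOn' hD hp₀ ?_
  set B := (C - (V p₀ - ε * penalty R p₀)) / ε with hB
  have hcompact : IsCompact (Icc (-√B) √B ×ˢ Icc (-√B) √B ×ˢ Icc 0 T) :=
    isCompact_Icc.prod (isCompact_Icc.prod isCompact_Icc)
  filter_upwards [mem_inf_of_left hcompact.compl_mem_cocompact,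
    mem_inf_of_right (mem_principal_self D)] with p hp hpD
  by_contra! hlt
  simp only [Pi.sub_apply] at hlt
  have hexp : 1 ≤ Real.exp ((6 * R + 1) * p.2.2) :=
    Real.one_le_exp (mul_nonneg (by linarith) (hDT p hpD).1)
  have hpen : penalty R p ≤ B := by
    rw [hB, le_div_iff₀ hε]
    linarith [hC (mem_image_of_mem V hpD)]
  have hsq : 1 + p.1 ^ 2 + p.2.1 ^ 2 ≤ B :=
    (le_mul_of_one_le_left (by positivity) hexp).trans hpen
  exact hp ⟨abs_le.1 (Real.abs_le_sqrt (by nlinarith [sq_nonneg p.2.1])),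
    abs_le.1 (Real.abs_le_sqrt (by nlinarith [sq_nonneg p.1])), hDT p hpD⟩

theorem nonpos_of_isSubsolutionAt (hR : 0 ≤ R) (hD : IsClosed D)
    (hDT : ∀ p ∈ D, p.2.2 ∈ Icc 0 T) (hV : ContinuousOn V D) (hbdd : BddAbove (V '' D))
    (hsub : ∀ x y t, (x, y, t) ∈ D → 0 < V (x, y, t) →
      IsParabolicInterior D x y t ∧ IsSubsolutionAt R V x y t) :
    ∀ p ∈ D, V p ≤ 0 := by
  intro p₀ hp₀
  by_contra! hpos
  have hpen := penalty_pos R p₀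
  set ε := V p₀ / (2 * penalty R p₀) with hε
  have hεpos : 0 < ε := by positivity
  obtain ⟨⟨x, y, t⟩, hq, hmax⟩ :=
    exists_isMaxOn_sub_penalty hR hD hDT hV hbdd hεpos ⟨p₀, hp₀⟩
  have hle : V p₀ - ε * penalty R p₀ ≤ V (x, y, t) - ε * penalty R (x, y, t) := hmax hp₀
  have hhalf : ε * penalty R p₀ = V p₀ / 2 := by rw [hε]; field_simp
  have hVq : 0 < V (x, y, t) := by
    nlinarith [mul_pos hεpos (penalty_pos R (x, y, t))]
  exact (hsub x y t hq hVq).2.not_isMaxOn hR hεpos (hsub x y t hq hVq).1 hmax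

end MaximumPrinciple

section ClassicalSolution

open Set Filter Topology

variable {T C C' L G G' : ℝ} {v a a' b b' g g' w wx wxx wt w' wx' wxx' wt' : ℝ → ℝ → ℝ}

/-- `|v| ≤ C` on `ℝ × [0,T]`. -/
def SlabBounded (T C : ℝ) (v : ℝ → ℝ → ℝ) : Prop :=
  ∀ x, ∀ t ∈ Icc 0 T, |v x t| ≤ C

/-- `v` is Lipschitz in space on `ℝ × [0,T]`, with constant `L`. -/
def SlabLipschitz (T L : ℝ) (v : ℝ → ℝ → ℝ) : Prop :=
  ∀ x y, ∀ t ∈ Icc 0 T, |v x t - v y t| ≤ L * |x - y|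

/-- `|g(x,t)| ≤ G / √t` on `ℝ × (0,T]`: the integrable singularity at the initial time that the
estimates allow in the source. -/
def InvSqrtBounded (T G : ℝ) (g : ℝ → ℝ → ℝ) : Prop :=
  ∀ x, ∀ t ∈ Ioc 0 T, |g x t| ≤ G / √t

theorem SlabBounded.nonneg (hT : 0 ≤ T) (h : SlabBounded T C v) : 0 ≤ C :=
  (abs_nonneg _).trans (h 0 0 ⟨le_rfl, hT⟩)

theorem SlabLipschitz.nonneg (hT : 0 ≤ T) (h : SlabLipschitz T L v) : 0 ≤ L := by
  simpa using (abs_nonneg _).trans (h 1 0 0 ⟨le_rfl, hT⟩)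

theorem SlabLipschitz.neg (h : SlabLipschitz T L v) : SlabLipschitz T L fun x t => -v x t := by
  intro x y t ht
  rw [neg_sub_neg, abs_sub_comm]
  exact h x y t ht

namespace InvSqrtBounded

theorem of_bounded (h : ∀ x, ∀ t ∈ Ioc 0 T, |g x t| ≤ C) : InvSqrtBounded T (√T * C) g := by
  intro x t ht
  rw [le_div_iff₀ (Real.sqrt_pos.2 ht.1), mul_comm]
  exact mul_le_mul (Real.sqrt_le_sqrt ht.2) (h x t ht) (abs_nonneg _) (Real.sqrt_nonneg T)

theorem nonneg (hT : 0 < T) (h : InvSqrtBounded T G g) : 0 ≤ G := by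
  have hG := (abs_nonneg _).trans (h 0 T ⟨hT, le_rfl⟩)
  rwa [le_div_iff₀ (Real.sqrt_pos.2 hT), zero_mul] at hG

theorem neg (h : InvSqrtBounded T G g) : InvSqrtBounded T G fun x t => -g x t :=
  fun x t ht => (abs_neg _).trans_le (h x t ht)

theorem add (h : InvSqrtBounded T G g) (h' : InvSqrtBounded T G' g') :
    InvSqrtBounded T (G + G') fun x t => g x t + g' x t := fun x t ht =>
  (abs_add_le _ _).trans ((add_le_add (h x t ht) (h' x t ht)).trans_eq (add_div _ _ _).symm)

theorem sub (h : InvSqrtBounded T G g) (h' : InvSqrtBounded T G' g') :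
    InvSqrtBounded T (G + G') fun x t => g x t - g' x t := by
  simpa only [sub_eq_add_neg] using h.add h'.neg

theorem bounded_mul (h : InvSqrtBounded T G g) (hv : SlabBounded T C v) :
    InvSqrtBounded T (C * G) fun x t => v x t * g x t := by
  intro x t ht
  rw [abs_mul, mul_div_assoc]
  have hvx := hv x t ⟨ht.1.le, ht.2⟩
  exact mul_le_mul hvx (h x t ht) (abs_nonneg _) ((abs_nonneg _).trans hvx)

end InvSqrtBounded

/-- `w` is a bounded classical solution of `w_t = a w_xx - b w_x + g` on `ℝ × (0,T]`, continuous up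
to the initial time, with partial derivatives `wx`, `wxx` and `wt`. -/
structure IsClassicalSol (T : ℝ) (a b g w wx wxx wt : ℝ → ℝ → ℝ) : Prop where
  continuousOn : ContinuousOn (fun p : ℝ × ℝ => w p.1 p.2) {p | p.2 ∈ Icc 0 T}
  bounded : ∃ C, SlabBounded T C w
  hasDerivAt_x : ∀ x, ∀ t ∈ Ioc 0 T, HasDerivAt (fun y => w y t) (wx x t) x
  hasDerivAt_xx : ∀ x, ∀ t ∈ Ioc 0 T, HasDerivAt (fun y => wx y t) (wxx x t) x
  hasDerivAt_t : ∀ x, ∀ t ∈ Ioc 0 T, HasDerivAt (fun s => w x s) (wt x t) t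
  equation : ∀ x, ∀ t ∈ Ioc 0 T, wt x t = a x t * wxx x t - b x t * wx x t + g x t

namespace IsClassicalSol

theorem hasDeriv₂At (h : IsClassicalSol T a b g w wx wxx wt) (x : ℝ) {t : ℝ} (ht : t ∈ Ioc 0 T) :
    HasDeriv₂At (fun y => w y t) (fun y => wx y t) (wxx x t) x :=
  ⟨.of_forall fun y => h.hasDerivAt_x y t ht, h.hasDerivAt_xx x t ht⟩

theorem neg (h : IsClassicalSol T a b g w wx wxx wt) :
    IsClassicalSol T a b (fun x t => -g x t) (fun x t => -w x t) (fun x t => -wx x t)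
      (fun x t => -wxx x t) fun x t => -wt x t where
  continuousOn := h.continuousOn.neg
  bounded := h.bounded.imp fun C hC x t ht => (abs_neg _).trans_le (hC x t ht)
  hasDerivAt_x x t ht := (h.hasDerivAt_x x t ht).neg
  hasDerivAt_xx x t ht := (h.hasDerivAt_xx x t ht).neg
  hasDerivAt_t x t ht := (h.hasDerivAt_t x t ht).neg
  equation x t ht := by rw [h.equation x t ht]; ring

theorem sub (h : IsClassicalSol T a b g w wx wxx wt)
    (h' : IsClassicalSol T a' b' g' w' wx' wxx' wt') :
    IsClassicalSol T a' b'
      (fun x t => g x t - g' x t + (a x t - a' x t) * wxx x t - (b x t - b' x t) * wx x t)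
      (fun x t => w x t - w' x t) (fun x t => wx x t - wx' x t)
      (fun x t => wxx x t - wxx' x t) (fun x t => wt x t - wt' x t) where
  continuousOn := h.continuousOn.sub h'.continuousOn
  bounded := by
    obtain ⟨C, hC⟩ := h.bounded
    obtain ⟨C', hC'⟩ := h'.bounded
    exact ⟨C + C', fun x t ht => (abs_sub _ _).trans (add_le_add (hC x t ht) (hC' x t ht))⟩
  hasDerivAt_x x t ht := (h.hasDerivAt_x x t ht).sub (h'.hasDerivAt_x x t ht)
  hasDerivAt_xx x t ht := (h.hasDerivAt_xx x t ht).sub (h'.hasDerivAt_xx x t ht)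
  hasDerivAt_t x t ht := (h.hasDerivAt_t x t ht).sub (h'.hasDerivAt_t x t ht)
  equation x t ht := by rw [h.equation x t ht, h'.equation x t ht]; ring

theorem drift_to_source (h : IsClassicalSol T a b g w wx wxx wt) :
    IsClassicalSol T a (fun _ _ => 0) (fun x t => g x t - b x t * wx x t) w wx wxx wt where
  __ := h
  equation x t ht := by rw [h.equation x t ht]; ring

theorem abs_deriv_le (h : IsClassicalSol T a b g w wx wxx wt)
    (hlip : SlabLipschitz T L w) (x : ℝ) {t : ℝ} (ht : t ∈ Ioc 0 T) : |wx x t| ≤ L :=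
  (h.hasDerivAt_x x t ht).le_of_lip' (hlip.nonneg (ht.1.le.trans ht.2)) <|
    .of_forall fun y => hlip y x t ⟨ht.1.le, ht.2⟩

theorem invSqrtBounded_drift (h : IsClassicalSol T a b g w wx wxx wt)
    (hlip : SlabLipschitz T L w) (hv : SlabBounded T C v) :
    InvSqrtBounded T (√T * (C * L)) fun x t => v x t * wx x t := by
  refine .of_bounded fun x t ht => ?_
  have hvx := hv x t ⟨ht.1.le, ht.2⟩
  rw [abs_mul]
  exact mul_le_mul hvx (h.abs_deriv_le hlip x ht) (abs_nonneg _) ((abs_nonneg _).trans hvx)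

end IsClassicalSol

end ClassicalSolution

section TimeRegularity

open Set Filter Topology

variable {T R Λ G h x₀ t₀ t₁ x t : ℝ} {a g w wx wxx wt : ℝ → ℝ → ℝ}

/-- A paraboloid of width `h` above the point `(x₀, t₀)`, lifted in time fast enough to be a
supersolution, plus a primitive of the bound `G / √t` on the source. -/
noncomputable def timeBarrier (Λ R G x₀ t₀ h x t : ℝ) : ℝ :=
  Λ * (h / 2 + ((x - x₀) ^ 2 + 2 * R * (t - t₀)) / (2 * h)) + 2 * G * (√t - √t₀)

theorem timeBarrier_nonneg (hΛ : 0 ≤ Λ) (hR : 0 ≤ R) (hG : 0 ≤ G) (hh : 0 ≤ h) (ht : t₀ ≤ t) :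
    0 ≤ timeBarrier Λ R G x₀ t₀ h x t := by
  have : 0 ≤ t - t₀ := sub_nonneg.2 ht
  have hsqrt : 0 ≤ √t - √t₀ := sub_nonneg.2 (Real.sqrt_le_sqrt ht)
  unfold timeBarrier
  positivity

theorem mul_abs_le_timeBarrier (hΛ : 0 ≤ Λ) (hh : 0 < h) :
    Λ * |x - x₀| ≤ timeBarrier Λ R G x₀ t₀ h x t₀ := by
  have hamgm : |x - x₀| ≤ h / 2 + (x - x₀) ^ 2 / (2 * h) := by
    rw [← sq_abs, div_add_div _ _ two_ne_zero (by positivity), le_div_iff₀ (by positivity)]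
    nlinarith [sq_nonneg (|x - x₀| - h)]
  simpa [timeBarrier] using mul_le_mul_of_nonneg_left hamgm hΛ

theorem sqrt_sub_sqrt_le {s t : ℝ} (hs : 0 ≤ s) (hst : s ≤ t) : √t - √s ≤ √(t - s) := by
  have hs' := Real.sq_sqrt hs
  have hd := Real.sq_sqrt (sub_nonneg.2 hst)
  rw [sub_le_iff_le_add, Real.sqrt_le_left (by positivity)]
  nlinarith [mul_nonneg (Real.sqrt_nonneg s) (Real.sqrt_nonneg (t - s))]

theorem timeBarrier_center_le (hΛ : 0 ≤ Λ) (hG : 0 ≤ G) (ht₀ : 0 ≤ t₀) (hlt : t₀ < t₁) :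
    timeBarrier Λ R G x₀ t₀ √(t₁ - t₀) x₀ t₁ ≤ (Λ * (1 + R) + 2 * G) * √(t₁ - t₀) := by
  have hh : 0 < √(t₁ - t₀) := Real.sqrt_pos.2 (sub_pos.2 hlt)
  have hparabola : √(t₁ - t₀) / 2 + ((x₀ - x₀) ^ 2 + 2 * R * (t₁ - t₀)) / (2 * √(t₁ - t₀)) =
      (1 / 2 + R) * √(t₁ - t₀) := by
    nth_rewrite 2 [← Real.sq_sqrt (sub_pos.2 hlt).le]
    field_simp
    ring
  rw [timeBarrier, hparabola]
  nlinarith [mul_le_mul_of_nonneg_left (sqrt_sub_sqrt_le ht₀ hlt.le) hG, mul_nonneg hΛ hh.le]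

theorem IsClassicalSol.isSubsolutionAt_sub_timeBarrier (hR : 0 ≤ R) (hΛ : 0 ≤ Λ) (hh : 0 < h)
    (hw : IsClassicalSol T a (fun _ _ => 0) g w wx wxx wt) (hg : InvSqrtBounded T G g)
    (ha : a x t ∈ Icc 0 R) (ht : t ∈ Ioc 0 T) (y : ℝ) :
    IsSubsolutionAt R
      (fun p => w p.1 p.2.2 - (w x₀ t₀ + timeBarrier Λ R G x₀ t₀ h p.1 p.2.2)) x y t := by
  have hspace : HasDeriv₂At (fun x' => w x₀ t₀ + timeBarrier Λ R G x₀ t₀ h x' t) _ _ x :=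
    .of_quadratic (w x₀ t₀ + timeBarrier Λ R G x₀ t₀ h 0 t) (-(Λ * x₀ / h)) (Λ / (2 * h))
      fun x' => by unfold timeBarrier; field_simp; ring
  have htime : HasDerivAt (fun s => w x₀ t₀ + timeBarrier Λ R G x₀ t₀ h x s)
      (Λ * (R / h) + G / √t) t := by
    have hid := (hasDerivAt_id t).sub_const t₀
    refine ((((((hid.const_mul (2 * R)).const_add ((x - x₀) ^ 2)).div_const (2 * h)).const_add
      (h / 2)).const_mul Λ).add (((Real.hasDerivAt_sqrt ht.1.ne').sub_const
      (√t₀)).const_mul (2 * G))).const_add (w x₀ t₀) |>.congr_deriv ?_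
    have := Real.sqrt_pos.2 ht.1
    field_simp
  refine ⟨a x t, ha, 0, ⟨le_rfl, hR⟩, 0, 0, by simpa, by simpa, _, fun _ => 0, _, 0, _,
    (hw.hasDeriv₂At x ht).sub hspace,
    .const (w x t - (w x₀ t₀ + timeBarrier Λ R G x₀ t₀ h x t)),
    (hw.hasDerivAt_t x t ht).sub htime, ?_⟩
  have hsource := (abs_le.1 (hg x t ht)).2
  have hdiff : a x t * (Λ / h) ≤ R * (Λ / h) := mul_le_mul_of_nonneg_right ha.2 (by positivity)
  rw [hw.equation x t ht]
  calc _ ≤ a x t * wxx x t - R * (Λ / h) := by linarith [mul_div_left_comm Λ R h]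
    _ ≤ a x t * wxx x t - a x t * (Λ / h) := by linarith
    _ = _ := by field_simp; ring

theorem IsClassicalSol.sub_le_mul_sqrt
    (hw : IsClassicalSol T a (fun _ _ => 0) g w wx wxx wt) (hg : InvSqrtBounded T G g)
    (ha : ∀ x, ∀ t ∈ Icc 0 T, a x t ∈ Icc 0 R) (hlip : SlabLipschitz T Λ w)
    (x₀ : ℝ) (ht₀ : 0 ≤ t₀) (hlt : t₀ < t₁) (ht₁ : t₁ ≤ T) :
    w x₀ t₁ - w x₀ t₀ ≤ (Λ * (1 + R) + 2 * G) * √(t₁ - t₀) := by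
  have hT : 0 < T := by linarith
  have hΛ := hlip.nonneg hT.le
  have hG := hg.nonneg hT
  have hR : 0 ≤ R := (ha 0 0 ⟨le_rfl, hT.le⟩).1.trans (ha 0 0 ⟨le_rfl, hT.le⟩).2
  have hh : 0 < √(t₁ - t₀) := Real.sqrt_pos.2 (sub_pos.2 hlt)
  set D : Set (ℝ × ℝ × ℝ) := {p | p.2.2 ∈ Icc t₀ t₁}
  have hDT : ∀ p ∈ D, p.2.2 ∈ Icc 0 T := fun p hp => ⟨ht₀.trans hp.1, hp.2.trans ht₁⟩
  obtain ⟨C, hC⟩ := hw.bounded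
  have hmax := nonpos_of_isSubsolutionAt hR (D := D)
    (V := fun p => w p.1 p.2.2 - (w x₀ t₀ + timeBarrier Λ R G x₀ t₀ √(t₁ - t₀) p.1 p.2.2))
    (isClosed_Icc.preimage (by fun_prop)) hDT ?_ ?_ ?_ (x₀, 0, t₁) ⟨hlt.le, le_rfl⟩
  · linarith [timeBarrier_center_le (R := R) (x₀ := x₀) hΛ hG ht₀ hlt]
  · refine (hw.continuousOn.comp (f := fun p : ℝ × ℝ × ℝ => (p.1, p.2.2))
      (by fun_prop) hDT).sub (continuousOn_const.add ?_)
    unfold timeBarrier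
    fun_prop
  · refine ⟨C + C, forall_mem_image.2 fun p hp => ?_⟩
    have hp' := abs_le.1 (hC p.1 p.2.2 (hDT p hp))
    have h₀' := abs_le.1 (hC x₀ t₀ ⟨ht₀, hlt.le.trans ht₁⟩)
    linarith [timeBarrier_nonneg (x₀ := x₀) (x := p.1) hΛ hR hG hh.le hp.1]
  · intro x y t ht hpos
    have hlt₀ : t₀ < t := by
      refine ht.1.lt_of_ne ?_
      rintro rfl
      have hinit := (le_abs_self _).trans (hlip x x₀ t₀ (hDT _ ht))
      linarith [mul_abs_le_timeBarrier (R := R) (G := G) (x₀ := x₀) (x := x) (t₀ := t₀) hΛ hh]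
    refine ⟨⟨.of_forall fun _ => ht, .of_forall fun _ => ht, ?_⟩,
      hw.isSubsolutionAt_sub_timeBarrier hR hΛ hh hg (ha x t (hDT _ ht))
        ⟨ht₀.trans_lt hlt₀, ht.2.trans ht₁⟩ y⟩
    filter_upwards [Ioo_mem_nhdsLT hlt₀] with s hs using ⟨hs.1.le, hs.2.le.trans ht.2⟩

theorem IsClassicalSol.abs_sub_le_mul_sqrt
    (hw : IsClassicalSol T a (fun _ _ => 0) g w wx wxx wt) (hg : InvSqrtBounded T G g)
    (ha : ∀ x, ∀ t ∈ Icc 0 T, a x t ∈ Icc 0 R) (hlip : SlabLipschitz T Λ w)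
    (x : ℝ) {s t : ℝ} (hs : s ∈ Icc 0 T) (ht : t ∈ Icc 0 T) :
    |w x s - w x t| ≤ (Λ * (1 + R) + 2 * G) * √|s - t| := by
  wlog hle : s ≤ t generalizing s t
  · rw [abs_sub_comm, abs_sub_comm s]
    exact this ht hs (le_of_not_ge hle)
  rcases hle.eq_or_lt with rfl | hlt
  · simp
  rw [abs_sub_comm, abs_sub_comm s, abs_of_pos (sub_pos.2 hlt), abs_le']
  refine ⟨hw.sub_le_mul_sqrt hg ha hlip x hs.1 hlt ht.2, ?_⟩
  have hneg : IsClassicalSol T a (fun _ _ => 0) _ _ _ _ _ := hw.neg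
  linarith [hneg.sub_le_mul_sqrt hg.neg ha hlip.neg x hs.1 hlt ht.2]

end TimeRegularity

section Profile

open Set Filter Topology

variable {r s t : ℝ}

/-- A function of `r` and `s`, nondecreasing and concave in `r`, that vanishes for `s = 0`. With
`s = √t` it is the part of the Lipschitz barrier that pays for a source of size `1 / √t`. -/
noncomputable def profile (r s : ℝ) : ℝ := s * r / (r + s)

theorem profile_nonneg (hr : 0 ≤ r) (hs : 0 ≤ s) : 0 ≤ profile r s := by
  unfold profile
  positivity

theorem profile_le_left (hr : 0 ≤ r) (hs : 0 ≤ s) : profile r s ≤ r :=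
  div_le_of_le_mul₀ (by positivity) hr (by nlinarith)

theorem profile_le_right (hr : 0 ≤ r) (hs : 0 ≤ s) : profile r s ≤ s :=
  div_le_of_le_mul₀ (by positivity) hs (by nlinarith)

theorem continuousOn_profile :
    ContinuousOn (fun p : ℝ × ℝ => profile p.1 p.2) {p | 0 ≤ p.1 ∧ 0 ≤ p.2} := by
  rintro p hp
  by_cases hz : p.1 + p.2 = 0
  · have hs : p.2 = 0 := by linarith [hp.1, hp.2]
    have hlim : Tendsto (fun q : ℝ × ℝ => q.2) (𝓝[{p | 0 ≤ p.1 ∧ 0 ≤ p.2}] p) (𝓝 0) :=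
      hs ▸ (continuous_snd.tendsto p).mono_left nhdsWithin_le_nhds
    have hzero : profile p.1 p.2 = 0 := by simp [profile, hz]
    rw [ContinuousWithinAt, hzero]
    refine squeeze_zero' ?_ ?_ hlim <;> filter_upwards [self_mem_nhdsWithin] with q hq
    exacts [profile_nonneg hq.1 hq.2, profile_le_right hq.1 hq.2]
  · exact ContinuousAt.continuousWithinAt (by unfold profile; fun_prop (disch := exact hz))

theorem hasDeriv₂At_profile (hrs : 0 < r + s) :
    HasDeriv₂At (fun r => profile r s) (fun r => s ^ 2 / (r + s) ^ 2)
      (-(2 * s ^ 2) / (r + s) ^ 3) r := by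
  have hne : ∀ᶠ q in 𝓝 r, q + s ≠ 0 :=
    (continuous_add_const s).continuousAt.eventually_ne hrs.ne'
  refine ⟨hne.mono fun q hq => ?_, ?_⟩
  · refine (((hasDerivAt_id q).const_mul s).div ((hasDerivAt_id q).add_const s) hq).congr_deriv ?_
    simp only [id_eq]
    field_simp
    ring
  · refine ((hasDerivAt_const r (s ^ 2)).div (((hasDerivAt_id r).add_const s).pow 2)
      (pow_ne_zero 2 hrs.ne')).congr_deriv ?_
    simp only [id_eq, Pi.pow_apply]
    field_simp
    ring

theorem hasDerivAt_profile_sqrt (hr : 0 ≤ r) (ht : 0 < t) :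
    HasDerivAt (fun t => profile r √t) (r ^ 2 / (2 * √t * (r + √t) ^ 2)) t := by
  have := Real.sqrt_pos.2 ht
  have hsqrt := Real.hasDerivAt_sqrt ht.ne'
  refine ((hsqrt.mul_const r).div (hsqrt.const_add r) (by positivity)).congr_deriv ?_
  field_simp
  ring

theorem mul_deriv_profile_le (hr : 0 ≤ r) (hs : 0 < s) :
    r * (s ^ 2 / (r + s) ^ 2) ≤ profile r s := by
  have hquot : s / (r + s) ≤ 1 := (div_le_one (by positivity)).2 (by linarith)
  calc r * (s ^ 2 / (r + s) ^ 2) = profile r s * (s / (r + s)) := by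
        unfold profile
        field_simp
    _ ≤ profile r s := mul_le_of_le_one_right (profile_nonneg hr hs.le) hquot

theorem profile_isSupersolution {lam : ℝ} (hlam : 0 < lam) (hr : 0 < r) (hs : 0 < s) :
    min (1 / 8) (lam / 2) / s ≤
      r ^ 2 / (2 * s * (r + s) ^ 2) - 2 * lam * (-(2 * s ^ 2) / (r + s) ^ 3) := by
  have hcubic : min (1 / 8) (lam / 2) * (r + s) ^ 3 ≤ r ^ 2 * (r + s) / 2 + 4 * lam * s ^ 3 := by
    rcases le_total r s with h | h
    · calc _ ≤ lam / 2 * (2 * s) ^ 3 := by gcongr; exacts [min_le_right _ _, by linarith]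
        _ = 4 * lam * s ^ 3 := by ring
        _ ≤ _ := le_add_of_nonneg_left (by positivity)
    · calc _ = min (1 / 8) (lam / 2) * (r + s) ^ 2 * (r + s) := by ring
        _ ≤ 1 / 8 * (2 * r) ^ 2 * (r + s) := by gcongr; exacts [min_le_left _ _, by linarith]
        _ = r ^ 2 * (r + s) / 2 := by ring
        _ ≤ _ := le_add_of_nonneg_right (by positivity)
  calc _ = min (1 / 8) (lam / 2) * (r + s) ^ 3 / (s * (r + s) ^ 3) := by field_simp
    _ ≤ (r ^ 2 * (r + s) / 2 + 4 * lam * s ^ 3) / (s * (r + s) ^ 3) := by gcongr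
    _ = _ := by field_simp; ring

end Profile

section SpatialRegularity

open Set Filter Topology

variable {T R L M A G lam r x y t : ℝ} {a b g w wx wxx wt : ℝ → ℝ → ℝ}

/-- The majorant of `w(x,t) - w(y,t)`, where `r = x - y`, for a solution whose initial datum has
Lipschitz constant `M`. The factor `e^{Lt}` pays for a drift with Lipschitz constant `L`. -/
noncomputable def lipBarrier (L M A r t : ℝ) : ℝ :=
  Real.exp (L * t) * (M * r + A * profile r √t)

theorem lipBarrier_nonneg (hM : 0 ≤ M) (hA : 0 ≤ A) (hr : 0 ≤ r) : 0 ≤ lipBarrier L M A r t := by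
  have hprofile := profile_nonneg hr (Real.sqrt_nonneg t)
  unfold lipBarrier
  positivity

theorem lipBarrier_le (hL : 0 ≤ L) (hM : 0 ≤ M) (hA : 0 ≤ A) (hr : 0 ≤ r) (ht : t ≤ T) :
    lipBarrier L M A r t ≤ Real.exp (L * T) * (M + A) * r := by
  have hprofile := profile_nonneg hr (Real.sqrt_nonneg t)
  rw [lipBarrier, mul_assoc, add_mul]
  gcongr
  exact profile_le_left hr (Real.sqrt_nonneg t)

theorem continuousOn_lipBarrier :
    ContinuousOn (fun p : ℝ × ℝ => lipBarrier L M A p.1 p.2) {p | 0 ≤ p.1} := by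
  have hprofile := continuousOn_profile.comp (s := {p : ℝ × ℝ | 0 ≤ p.1})
    (f := fun p : ℝ × ℝ => (p.1, √p.2)) (by fun_prop) fun p hp => ⟨hp, Real.sqrt_nonneg _⟩
  exact ContinuousOn.mul (by fun_prop) (ContinuousOn.add (by fun_prop) (hprofile.const_mul A))

theorem hasDeriv₂At_lipBarrier (hr : 0 ≤ r) (ht : 0 < t) :
    HasDeriv₂At (fun r => lipBarrier L M A r t)
      (fun r => Real.exp (L * t) * (M + A * (√t ^ 2 / (r + √t) ^ 2)))
      (Real.exp (L * t) * (A * (-(2 * √t ^ 2) / (r + √t) ^ 3))) r := by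
  have hprofile := hasDeriv₂At_profile (add_pos_of_nonneg_of_pos hr (Real.sqrt_pos.2 ht))
  refine ⟨hprofile.1.mono fun q hq => ?_, ((hprofile.2.const_mul A).const_add M).const_mul _⟩
  exact (((hasDerivAt_const_mul M).add (hq.const_mul A)).const_mul _)

theorem hasDerivAt_lipBarrier_time (hr : 0 ≤ r) (ht : 0 < t) :
    HasDerivAt (fun t => lipBarrier L M A r t)
      (L * lipBarrier L M A r t +
        Real.exp (L * t) * (A * (r ^ 2 / (2 * √t * (r + √t) ^ 2)))) t := by
  refine (((hasDerivAt_const_mul L).exp.mul (((hasDerivAt_profile_sqrt hr ht).const_mul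
    A).const_add (M * r)))).congr_deriv ?_
  unfold lipBarrier
  ring

theorem lipBarrier_isSupersolution (hlam : 0 < lam) (hL : 0 ≤ L) (hA : 0 ≤ A)
    (hAG : A * min (1 / 8) (lam / 2) = 2 * G) (hr : 0 < r) (ht : 0 < t) :
    2 * lam * (Real.exp (L * t) * (A * (-(2 * √t ^ 2) / (r + √t) ^ 3))) +
        L * r * (Real.exp (L * t) * (M + A * (√t ^ 2 / (r + √t) ^ 2))) + 2 * (G / √t) ≤
      L * lipBarrier L M A r t + Real.exp (L * t) * (A * (r ^ 2 / (2 * √t * (r + √t) ^ 2))) := by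
  have hs := Real.sqrt_pos.2 ht
  set E := Real.exp (L * t)
  have hEone : 1 ≤ E := Real.one_le_exp (by positivity)
  have hdrift : L * r * (E * (M + A * (√t ^ 2 / (r + √t) ^ 2))) ≤ L * lipBarrier L M A r t := by
    calc _ = L * (E * (M * r + A * (r * (√t ^ 2 / (r + √t) ^ 2)))) := by ring
      _ ≤ _ := by unfold lipBarrier; gcongr; exact mul_deriv_profile_le hr.le hs
  have hsource : 2 * (G / √t) ≤ E * (A * (r ^ 2 / (2 * √t * (r + √t) ^ 2) -
      2 * lam * (-(2 * √t ^ 2) / (r + √t) ^ 3))) := by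
    calc 2 * (G / √t) = A * (min (1 / 8) (lam / 2) / √t) := by
          rw [← mul_div_assoc, ← mul_div_assoc, hAG]
      _ ≤ E * (A * (min (1 / 8) (lam / 2) / √t)) := le_mul_of_one_le_left (by positivity) hEone
      _ ≤ _ := by gcongr; exact profile_isSupersolution hlam hr hs
  linarith

/-- The coefficients of `w_t = a w_xx - b w_x + g` on `ℝ × [0,T]` for which the estimates hold. -/
structure IsAdmissible (T lam R : ℝ) (a b : ℝ → ℝ → ℝ) : Prop where
  mem_Icc : ∀ x, ∀ t ∈ Icc 0 T, a x t ∈ Icc lam R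
  drift_bounded : SlabBounded T R b
  drift_lipschitz : SlabLipschitz T R b

theorem IsClassicalSol.isSubsolutionAt_sub_lipBarrier
    (hw : IsClassicalSol T a b g w wx wxx wt) (hab : IsAdmissible T lam R a b) (hlam : 0 < lam)
    (hg : InvSqrtBounded T G g) (hM : 0 ≤ M) (hA : 0 ≤ A)
    (hAG : A * min (1 / 8) (lam / 2) = 2 * G) (hyx : y < x) (ht : t ∈ Ioc 0 T) :
    IsSubsolutionAt R
      (fun p => w p.1 p.2.2 - w p.2.1 p.2.2 - lipBarrier R M A (p.1 - p.2.1) p.2.2) x y t := by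
  have htI : t ∈ Icc 0 T := ⟨ht.1.le, ht.2⟩
  have hax := hab.mem_Icc x t htI
  have hay := hab.mem_Icc y t htI
  have hR : 0 ≤ R := hlam.le.trans (hax.1.trans hax.2)
  have hr : 0 < x - y := sub_pos.2 hyx
  have hbarrier : HasDeriv₂At (fun r => lipBarrier R M A r t) _ _ (x - y) :=
    hasDeriv₂At_lipBarrier hr.le ht.1
  refine ⟨a x t, ⟨hlam.le.trans hax.1, hax.2⟩, a y t, ⟨hlam.le.trans hay.1, hay.2⟩,
    -b x t, -b y t, (abs_neg _).trans_le (hab.drift_bounded x t htI),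
    (abs_neg _).trans_le (hab.drift_bounded y t htI), _, _, _, _, _,
    ((hw.hasDeriv₂At x ht).sub (.const (w y t))).sub (hbarrier.comp_sub_const y),
    ((HasDeriv₂At.const (w x t)).sub (hw.hasDeriv₂At y ht)).sub (hbarrier.comp_const_sub x),
    ((hw.hasDerivAt_t x t ht).sub (hw.hasDerivAt_t y t ht)).sub
      (hasDerivAt_lipBarrier_time hr.le ht.1), ?_⟩
  have hsuper := lipBarrier_isSupersolution (M := M) hlam hR hA hAG hr ht.1
  have hgx := (abs_le.1 (hg x t ht)).2
  have hgy := (abs_le.1 (hg y t ht)).1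
  have hdrift := (abs_le.1 (hab.drift_lipschitz x y t htI)).1
  rw [abs_of_pos hr] at hdrift
  have hs := Real.sqrt_pos.2 ht.1
  have hfirst := mul_le_mul_of_nonneg_right hdrift
    (by positivity : 0 ≤ Real.exp (R * t) * (M + A * (√t ^ 2 / ((x - y) + √t) ^ 2)))
  have hconcave : 0 ≤ Real.exp (R * t) * (A * (2 * √t ^ 2 / ((x - y) + √t) ^ 3)) := by positivity
  have hsecond := mul_le_mul_of_nonneg_right (add_le_add hax.1 hay.1) hconcave
  rw [hw.equation x t ht, hw.equation y t ht]
  rw [neg_div] at hsuper ⊢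
  linarith

/-- The constant in the spatial Lipschitz estimate. -/
noncomputable def lipConst (T R lam : ℝ) : ℝ :=
  Real.exp (R * T) * (1 + 2 / min (1 / 8) (lam / 2))

theorem lipConst_nonneg (hlam : 0 < lam) : 0 ≤ lipConst T R lam := by
  unfold lipConst
  positivity

theorem IsClassicalSol.sub_le_lipBarrier
    (hw : IsClassicalSol T a b g w wx wxx wt) (hab : IsAdmissible T lam R a b) (hlam : 0 < lam)
    (hg : InvSqrtBounded T G g) (hM : 0 ≤ M) (hA : 0 ≤ A)
    (hAG : A * min (1 / 8) (lam / 2) = 2 * G) (hinit : ∀ x y, |w x 0 - w y 0| ≤ M * |x - y|)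
    (hyx : y ≤ x) (ht : t ∈ Icc 0 T) : w x t - w y t ≤ lipBarrier R M A (x - y) t := by
  have hax := hab.mem_Icc x t ht
  set D : Set (ℝ × ℝ × ℝ) := {p | p.2.1 ≤ p.1} ∩ {p | p.2.2 ∈ Icc 0 T}
  obtain ⟨C, hC⟩ := hw.bounded
  refine sub_nonpos.1 (nonpos_of_isSubsolutionAt (hlam.le.trans (hax.1.trans hax.2)) (D := D)
    (V := fun p => w p.1 p.2.2 - w p.2.1 p.2.2 - lipBarrier R M A (p.1 - p.2.1) p.2.2)
    ((isClosed_le (by fun_prop) (by fun_prop)).inter (isClosed_Icc.preimage (by fun_prop)))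
    (fun p hp => hp.2) ?_ ?_ ?_ (x, y, t) ⟨hyx, ht⟩)
  · exact ((hw.continuousOn.comp (f := fun p : ℝ × ℝ × ℝ => (p.1, p.2.2)) (by fun_prop)
      fun p hp => hp.2).sub (hw.continuousOn.comp (f := fun p : ℝ × ℝ × ℝ => (p.2.1, p.2.2))
      (by fun_prop) fun p hp => hp.2)).sub (continuousOn_lipBarrier.comp
      (f := fun p : ℝ × ℝ × ℝ => (p.1 - p.2.1, p.2.2)) (by fun_prop) fun p hp =>
      sub_nonneg.2 (show p.2.1 ≤ p.1 from hp.1))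
  · refine ⟨C + C, forall_mem_image.2 fun p hp => ?_⟩
    have hp₁ := abs_le.1 (hC p.1 p.2.2 hp.2)
    have hp₂ := abs_le.1 (hC p.2.1 p.2.2 hp.2)
    linarith [lipBarrier_nonneg (L := R) (t := p.2.2) hM hA (sub_nonneg.2 hp.1)]
  · rintro x y t ⟨hle : y ≤ x, ht : t ∈ Icc 0 T⟩ hpos
    have hlt : y < x := by
      refine hle.lt_of_ne ?_
      rintro rfl
      simp [lipBarrier, profile] at hpos
    have ht₀ : 0 < t := by
      refine ht.1.lt_of_ne ?_
      rintro rfl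
      have hxy := (abs_le.1 (hinit x y)).2
      rw [abs_of_pos (sub_pos.2 hlt)] at hxy
      simp [lipBarrier, profile] at hpos
      linarith
    refine ⟨⟨?_, ?_, ?_⟩, hw.isSubsolutionAt_sub_lipBarrier hab hlam hg hM hA hAG hlt ⟨ht₀, ht.2⟩⟩
    · filter_upwards [eventually_gt_nhds hlt] with x' hx' using ⟨hx'.le, ht⟩
    · filter_upwards [eventually_lt_nhds hlt] with y' hy' using ⟨hy'.le, ht⟩
    · filter_upwards [Ioo_mem_nhdsLT ht₀] with s hs using ⟨hle, hs.1.le, hs.2.le.trans ht.2⟩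

theorem IsClassicalSol.slabLipschitz
    (hw : IsClassicalSol T a b g w wx wxx wt) (hab : IsAdmissible T lam R a b) (hlam : 0 < lam)
    (hT : 0 < T) (hg : InvSqrtBounded T G g) (hinit : ∀ x y, |w x 0 - w y 0| ≤ M * |x - y|) :
    SlabLipschitz T (lipConst T R lam * (M + G)) w := by
  intro x y t ht
  wlog hyx : y ≤ x generalizing x y
  · rw [abs_sub_comm, abs_sub_comm x]
    exact this y x (le_of_not_ge hyx)
  have hax := hab.mem_Icc x t ht
  have hR : 0 ≤ R := hlam.le.trans (hax.1.trans hax.2)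
  have hM : 0 ≤ M := by simpa using (abs_nonneg _).trans (hinit 1 0)
  have hG := hg.nonneg hT
  set c := min (1 / 8) (lam / 2)
  have hcpos : 0 < c := by positivity
  have hA : 0 ≤ 2 / c * G := by positivity
  have hAG : 2 / c * G * c = 2 * G := by field_simp
  have hbarrier : lipBarrier R M (2 / c * G) (x - y) t ≤ lipConst T R lam * (M + G) * (x - y) := by
    refine (lipBarrier_le hR hM hA (sub_nonneg.2 hyx) ht.2).trans ?_
    have hMA : M + 2 / c * G ≤ (1 + 2 / c) * (M + G) := by
      linarith [mul_nonneg (by positivity : 0 ≤ 2 / c) hM]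
    have h := mul_le_mul_of_nonneg_right
      (mul_le_mul_of_nonneg_left hMA (Real.exp_pos (R * T)).le) (sub_nonneg.2 hyx)
    simpa only [lipConst, mul_assoc] using h
  rw [abs_of_nonneg (sub_nonneg.2 hyx), abs_le']
  refine ⟨(hw.sub_le_lipBarrier hab hlam hg hM hA hAG hinit hyx ht).trans hbarrier, ?_⟩
  have hinit' : ∀ x y, |-w x 0 - -w y 0| ≤ M * |x - y| := fun x y => by
    rw [neg_sub_neg, abs_sub_comm]
    exact hinit x y
  linarith [hw.neg.sub_le_lipBarrier hab hlam hg.neg hM hA hAG hinit' hyx ht]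

end SpatialRegularity

section MixedDifference

open Set Filter Topology

variable {f f' g g' g'' a : ℝ → ℝ} {B G L M d p q r x y z h : ℝ}

theorem abs_sub_le_of_abs_deriv_le (hf : ∀ p, HasDerivAt f (f' p) p)
    (hM : ∀ p, |p - x| ≤ r → |f' p| ≤ M) (hp : |p - x| ≤ r) (hq : |q - x| ≤ r) :
    |f p - f q| ≤ M * |p - q| :=
  (convex_closedBall x r).norm_image_sub_le_of_norm_hasDerivWithin_le
    (fun p _ => (hf p).hasDerivWithinAt) (fun p hp => hM p hp) hq hp

/-- The mixed second difference of `g` at `x` with increments `y` and `z`, equal to `y z g''(x)` to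
leading order. As a function of `(y, z)` it has equal second derivatives in `y` and in `z`, namely
the mixed difference of `g''`. -/
noncomputable def mixedDiff (g : ℝ → ℝ) (x y z : ℝ) : ℝ :=
  (g (x + y + z) - g (x + y - z) - g (x - y + z) + g (x - y - z)) / 4

theorem mixedDiff_comm (g : ℝ → ℝ) (x y z : ℝ) : mixedDiff g x y z = mixedDiff g x z y := by
  rw [mixedDiff, mixedDiff, add_right_comm x y z, add_sub_right_comm x y z,
    sub_add_eq_add_sub x y z, sub_right_comm x y z]
  ring

@[simp]
theorem mixedDiff_zero_left (g : ℝ → ℝ) (x z : ℝ) : mixedDiff g x 0 z = 0 := by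
  simp [mixedDiff]

@[simp]
theorem mixedDiff_zero_right (g : ℝ → ℝ) (x y : ℝ) : mixedDiff g x y 0 = 0 := by
  simp [mixedDiff]

theorem hasDerivAt_mixedDiff (hg : ∀ p, HasDerivAt g (g' p) p) (x y z : ℝ) :
    HasDerivAt (mixedDiff g x y)
      ((g' (x + y + z) + g' (x + y - z) - g' (x - y + z) - g' (x - y - z)) / 4) z := by
  have hadd (c : ℝ) := (hg (c + z)).comp_const_add c z
  have hsub (c : ℝ) := (hg (c - z)).comp_const_sub c z
  exact (((((hadd (x + y)).sub (hsub (x + y))).sub (hadd (x - y))).add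
    (hsub (x - y))).div_const 4).congr_deriv (by ring)

theorem hasDeriv₂At_mixedDiff (hg : ∀ p, HasDerivAt g (g' p) p)
    (hg' : ∀ p, HasDerivAt g' (g'' p) p) (x y z : ℝ) :
    HasDeriv₂At (mixedDiff g x y)
      (fun z => (g' (x + y + z) + g' (x + y - z) - g' (x - y + z) - g' (x - y - z)) / 4)
      (mixedDiff g'' x y z) z := by
  refine ⟨.of_forall (hasDerivAt_mixedDiff hg x y), ?_⟩
  have hadd (c : ℝ) := (hg' (c + z)).comp_const_add c z
  have hsub (c : ℝ) := (hg' (c - z)).comp_const_sub c z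
  exact (((((hadd (x + y)).add (hsub (x + y))).sub (hadd (x - y))).sub
    (hsub (x - y))).div_const 4).congr_deriv (by rw [mixedDiff]; ring)

theorem abs_mixedDiff_le (hy : 0 ≤ y) (hz : 0 ≤ z)
    (hg : ∀ p q, |p - x| ≤ y + z → |q - x| ≤ y + z → |g p - g q| ≤ G * |p - q|) :
    |mixedDiff g x y z| ≤ G * z := by
  have hright := hg (x + y + z) (x + y - z) (by rw [abs_le]; constructor <;> linarith)
    (by rw [abs_le]; constructor <;> linarith)
  have hleft := hg (x - y + z) (x - y - z) (by rw [abs_le]; constructor <;> linarith)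
    (by rw [abs_le]; constructor <;> linarith)
  rw [show x + y + z - (x + y - z) = 2 * z by ring,
    abs_of_nonneg (by positivity : 0 ≤ 2 * z), abs_le] at hright
  rw [show x - y + z - (x - y - z) = 2 * z by ring,
    abs_of_nonneg (by positivity : 0 ≤ 2 * z), abs_le] at hleft
  rw [mixedDiff, abs_le]
  constructor <;> linarith [hright.1, hright.2, hleft.1, hleft.2]

theorem mixedDiff_le_of_abs_second_deriv_le (hg : ∀ p, HasDerivAt g (g' p) p)
    (hg' : ∀ p, HasDerivAt g' (g'' p) p) (hM : ∀ p, |p - x| ≤ y + z → |g'' p| ≤ M)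
    (hy : 0 ≤ y) (hz : 0 ≤ z) : mixedDiff g x y z ≤ M * (y * z) := by
  have hderiv (s : ℝ) (hs : |s - 0| ≤ z) :
      |(g' (x + y + s) + g' (x + y - s) - g' (x - y + s) - g' (x - y - s)) / 4| ≤ M * y := by
    rw [sub_zero, abs_le] at hs
    have hup : |g' (x + y + s) - g' (x - y + s)| ≤ M * |x + y + s - (x - y + s)| :=
      abs_sub_le_of_abs_deriv_le hg' hM (by rw [abs_le]; constructor <;> linarith)
        (by rw [abs_le]; constructor <;> linarith)
    have hdown : |g' (x + y - s) - g' (x - y - s)| ≤ M * |x + y - s - (x - y - s)| :=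
      abs_sub_le_of_abs_deriv_le hg' hM (by rw [abs_le]; constructor <;> linarith)
        (by rw [abs_le]; constructor <;> linarith)
    rw [show x + y + s - (x - y + s) = 2 * y by ring,
      abs_of_nonneg (by positivity : 0 ≤ 2 * y), abs_le] at hup
    rw [show x + y - s - (x - y - s) = 2 * y by ring,
      abs_of_nonneg (by positivity : 0 ≤ 2 * y), abs_le] at hdown
    rw [abs_le]
    constructor <;> linarith [hup.1, hup.2, hdown.1, hdown.2]
  have hz₀ : |z - 0| ≤ z := by rw [sub_zero, abs_of_nonneg hz]
  have hmean := abs_sub_le_of_abs_deriv_le (hasDerivAt_mixedDiff hg x y) hderiv hz₀ (q := 0)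
    (by simpa using hz)
  rw [mixedDiff_zero_right, sub_zero, sub_zero, abs_of_nonneg hz] at hmean
  linarith [le_abs_self (mixedDiff g x y z)]

theorem second_deriv_le_of_mixedDiff_le (hh : 0 < h) (hg : ∀ p, HasDerivAt g (g' p) p)
    (hg' : HasDerivAt g' d x)
    (hB : ∀ y ∈ Ioo 0 h, ∀ z ∈ Ioo 0 h, mixedDiff g x y z ≤ B * (y * z)) : d ≤ B := by
  have hfirst : ∀ y ∈ Ioo 0 h, (g' (x + y) - g' (x - y)) / 2 ≤ B * y := by
    intro y hy
    refine deriv_le_of_eventually_le_mul (f := mixedDiff g x y)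
      ((hasDerivAt_mixedDiff hg x y 0).congr_deriv ?_) (mixedDiff_zero_right g x y) ?_
    · simp only [add_zero, sub_zero]
      ring
    · filter_upwards [Ioo_mem_nhdsGT hh] with z hz
      linarith [hB y hy z hz]
  refine deriv_le_of_eventually_le_mul (f := fun y => (g' (x + y) - g' (x - y)) / 2) ?_ (by simp)
    (by filter_upwards [Ioo_mem_nhdsGT hh] with y hy using hfirst y hy)
  have hadd := HasDerivAt.comp_const_add x 0 (by rwa [add_zero])
  have hsub := HasDerivAt.comp_const_sub x 0 (by rwa [sub_zero])
  exact ((hadd.sub hsub).div_const 2).congr_deriv (by ring)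

theorem mixedDiff_mul_le (hL : 0 ≤ L) (hy : 0 ≤ y) (hz : 0 ≤ z)
    (ha : ∀ p, |a p - a x| ≤ L * |p - x|) (hM : ∀ p, |p - x| ≤ y + z → |g p| ≤ M) :
    mixedDiff (fun p => a p * g p) x y z ≤ a x * mixedDiff g x y z + L * M * (y + z) := by
  have hcorner (p : ℝ) (hp : |p - x| ≤ y + z) : |(a p - a x) * g p| ≤ L * (y + z) * M := by
    rw [abs_mul]
    exact mul_le_mul ((ha p).trans (mul_le_mul_of_nonneg_left hp hL)) (hM p hp) (abs_nonneg _)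
      (by positivity)
  have h₁ := abs_le.1 (hcorner (x + y + z) (by rw [abs_le]; constructor <;> linarith))
  have h₂ := abs_le.1 (hcorner (x + y - z) (by rw [abs_le]; constructor <;> linarith))
  have h₃ := abs_le.1 (hcorner (x - y + z) (by rw [abs_le]; constructor <;> linarith))
  have h₄ := abs_le.1 (hcorner (x - y - z) (by rw [abs_le]; constructor <;> linarith))
  simp only [mixedDiff]
  linarith [h₁.2, h₂.1, h₃.1, h₄.2]

end MixedDifference

section LocalSecondDerivative

open Set Filter Topology

variable {T R lam L M G Λ κ h τ x y z t x₀ t₀ : ℝ} {a g w wx wxx wt : ℝ → ℝ → ℝ}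

/-- The barrier for the mixed second difference on the box `[0,h]² × [t₀ - τ, t₀]`: the first term
dominates it at the initial time, the last one on the sides `y = h` and `z = h`, and the concave
middle one makes the sum a supersolution. -/
noncomputable def mixedBarrier (M κ Λ h τ t₀ y z t : ℝ) : ℝ :=
  y * z * (M * (t₀ - t) / τ + κ * (2 * h - y - z) + Λ / h)

theorem mixedBarrier_comm : mixedBarrier M κ Λ h τ t₀ y z t = mixedBarrier M κ Λ h τ t₀ z y t := by
  rw [mixedBarrier, mixedBarrier]
  ring

theorem hasDeriv₂At_mixedBarrier (y z : ℝ) :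
    HasDeriv₂At (fun z => mixedBarrier M κ Λ h τ t₀ y z t)
      (fun z => y * (M * (t₀ - t) / τ + κ * (2 * h - y) + Λ / h) + 2 * (-(y * κ)) * z)
      (2 * (-(y * κ))) z :=
  .of_quadratic 0 _ _ fun z => by rw [mixedBarrier]; ring

theorem hasDerivAt_mixedBarrier_time (y z t : ℝ) :
    HasDerivAt (mixedBarrier M κ Λ h τ t₀ y z) (-(y * z * (M / τ))) t := by
  have hlin := ((((hasDerivAt_id t).const_sub t₀).const_mul M).div_const τ).add_const
    (κ * (2 * h - y - z)) |>.add_const (Λ / h) |>.const_mul (y * z)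
  exact hlin.congr_deriv (by ring)

theorem mul_le_mixedBarrier_side (hM : 0 ≤ M) (hκ : 0 ≤ κ) (hτ : 0 < τ) (hy : y ∈ Icc 0 h)
    (hz : z ∈ Icc 0 h) (ht : t ≤ t₀) : Λ / h * (y * z) ≤ mixedBarrier M κ Λ h τ t₀ y z t := by
  have htime : 0 ≤ M * (t₀ - t) / τ := div_nonneg (mul_nonneg hM (sub_nonneg.2 ht)) hτ.le
  have hmiddle : 0 ≤ κ * (2 * h - y - z) := mul_nonneg hκ (by linarith [hy.2, hz.2])
  rw [mixedBarrier, mul_comm (Λ / h)]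
  exact mul_le_mul_of_nonneg_left (by linarith) (mul_nonneg hy.1 hz.1)

theorem mul_le_mixedBarrier_initial (hκ : 0 ≤ κ) (hΛ : 0 ≤ Λ) (hτ : 0 < τ) (hh : 0 < h)
    (hy : y ∈ Icc 0 h) (hz : z ∈ Icc 0 h) :
    M * (y * z) ≤ mixedBarrier M κ Λ h τ t₀ y z (t₀ - τ) := by
  have hmiddle : 0 ≤ κ * (2 * h - y - z) := mul_nonneg hκ (by linarith [hy.2, hz.2])
  have hside : 0 ≤ Λ / h := by positivity
  rw [mixedBarrier, sub_sub_cancel, mul_div_cancel_right₀ M hτ.ne', mul_comm M]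
  exact mul_le_mul_of_nonneg_left (by linarith) (mul_nonneg hy.1 hz.1)

theorem mixedBarrier_final_le (hκ : 0 ≤ κ) (hy : 0 ≤ y) (hz : 0 ≤ z) :
    mixedBarrier M κ Λ h τ t₀ y z t₀ ≤ (κ * (2 * h) + Λ / h) * (y * z) := by
  have hsub : 0 ≤ y * z * (κ * (y + z)) := by positivity
  have hexpand : mixedBarrier M κ Λ h τ t₀ y z t₀ =
      (κ * (2 * h) + Λ / h) * (y * z) - y * z * (κ * (y + z)) := by
    rw [mixedBarrier]
    ring
  linarith

theorem mem_Ioo_of_mixedBarrier_lt {f : ℝ → ℝ} (hf : ∀ p q, |f p - f q| ≤ Λ * |p - q|)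
    (hM : 0 ≤ M) (hκ : 0 ≤ κ) (hτ : 0 < τ) (hh : 0 < h) (hy : y ∈ Icc 0 h) (hz : z ∈ Icc 0 h)
    (ht : t ≤ t₀) (hlt : mixedBarrier M κ Λ h τ t₀ y z t < mixedDiff f x y z) : y ∈ Ioo 0 h := by
  refine ⟨hy.1.lt_of_ne ?_, hy.2.lt_of_ne ?_⟩
  · rintro rfl
    simp [mixedBarrier] at hlt
  · rintro rfl
    have hlip := (abs_le.1 (abs_mixedDiff_le hy.1 hz.1 fun p q (_ : |p - x| ≤ _) _ => hf p q)).2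
    have hside := mul_le_mixedBarrier_side (Λ := Λ) hM hκ hτ hy hz ht
    rw [← mul_assoc, div_mul_cancel₀ Λ hh.ne'] at hside
    linarith

namespace IsClassicalSol

theorem hasDerivAt_mixedDiff_time (hw : IsClassicalSol T a (fun _ _ => 0) g w wx wxx wt)
    (x y z : ℝ) (ht : t ∈ Ioc 0 T) :
    HasDerivAt (fun s => mixedDiff (fun p => w p s) x y z)
      (mixedDiff (fun p => a p t * wxx p t) x y z + mixedDiff (fun p => g p t) x y z) t := by
  have hwt (p : ℝ) := hw.hasDerivAt_t p t ht
  refine ((((hwt (x + y + z)).sub (hwt (x + y - z))).sub (hwt (x - y + z))).add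
    (hwt (x - y - z))).div_const 4 |>.congr_deriv ?_
  simp only [mixedDiff, hw.equation _ t ht]
  ring

theorem continuousOn_mixedDiff (hw : IsClassicalSol T a (fun _ _ => 0) g w wx wxx wt) (x : ℝ) :
    ContinuousOn (fun p : ℝ × ℝ × ℝ => mixedDiff (fun q => w q p.2.2) x p.1 p.2.1)
      {p | p.2.2 ∈ Icc 0 T} := by
  have hcomp (φ : ℝ × ℝ × ℝ → ℝ) (hφ : Continuous φ) :
      ContinuousOn (fun p : ℝ × ℝ × ℝ => w (φ p) p.2.2) {p | p.2.2 ∈ Icc 0 T} :=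
    hw.continuousOn.comp (f := fun p : ℝ × ℝ × ℝ => (φ p, p.2.2)) (by fun_prop) fun _ hp => hp
  exact ((((hcomp (fun p => x + p.1 + p.2.1) (by fun_prop)).sub
    (hcomp (fun p => x + p.1 - p.2.1) (by fun_prop))).sub
    (hcomp (fun p => x - p.1 + p.2.1) (by fun_prop))).add
    (hcomp (fun p => x - p.1 - p.2.1) (by fun_prop))).div_const 4

theorem isSubsolutionAt_mixedDiff (hw : IsClassicalSol T a (fun _ _ => 0) g w wx wxx wt)
    (hlam : 0 < lam) (ha : a x₀ t ∈ Icc lam R) (haL : ∀ p, |a p t - a x₀ t| ≤ L * |p - x₀|)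
    (hL : 0 ≤ L) (hG : 0 ≤ G) (hM₀ : 0 ≤ M) (hτ : 0 < τ)
    (hM : ∀ p, |p - x₀| ≤ 2 * h → |wxx p t| ≤ M)
    (hg : ∀ p q, |p - x₀| ≤ 2 * h → |q - x₀| ≤ 2 * h → |g p t - g q t| ≤ G * |p - q|)
    (hκ₀ : 0 ≤ κ) (hκ : κ * lam = L * M + G + h * M / τ) (ht : t ∈ Ioc 0 T) (hy : y ∈ Icc 0 h)
    (hz : z ∈ Icc 0 h) :
    IsSubsolutionAt R (fun p => mixedDiff (fun q => w q p.2.2) x₀ p.1 p.2.1 -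
      mixedBarrier M κ Λ h τ t₀ p.1 p.2.1 p.2.2) y z t := by
  have hmixed := hasDeriv₂At_mixedDiff (fun p => hw.hasDerivAt_x p t ht)
    fun p => hw.hasDerivAt_xx p t ht
  have hhalf : a x₀ t / 2 ∈ Icc 0 R := ⟨by linarith [ha.1], by linarith [ha.1, ha.2]⟩
  have hR : |(0 : ℝ)| ≤ R := by linarith [abs_zero (α := ℝ), ha.1, ha.2]
  have hvy := (hmixed x₀ z y).sub (hasDeriv₂At_mixedBarrier (M := M) (κ := κ) (Λ := Λ) (h := h)
    (τ := τ) (t₀ := t₀) (t := t) z y)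
  simp only [mixedDiff_comm _ x₀ z, mixedBarrier_comm (y := z)] at hvy
  refine ⟨_, hhalf, _, hhalf, 0, 0, hR, hR, _, _, _, _, _, hvy,
    (hmixed x₀ y z).sub (hasDeriv₂At_mixedBarrier y z),
    (hw.hasDerivAt_mixedDiff_time x₀ y z ht).sub (hasDerivAt_mixedBarrier_time y z t), ?_⟩
  have hyz (p : ℝ) (hp : |p - x₀| ≤ y + z) : |p - x₀| ≤ 2 * h := by linarith [hy.2, hz.2]
  have hdiff := mixedDiff_mul_le (a := fun p => a p t) (g := fun p => wxx p t) hL hy.1 hz.1 haL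
    fun p hp => hM p (hyz p hp)
  have hsource := (abs_le.1 (abs_mixedDiff_le (g := fun p => g p t) hy.1 hz.1
    fun p q hp hq => hg p q (hyz p hp) (hyz q hq))).2
  have hconcave := mul_le_mul_of_nonneg_right ha.1 (mul_nonneg hκ₀ (add_nonneg hy.1 hz.1))
  have htime : y * z * (M / τ) ≤ h * (y + z) * (M / τ) := by
    refine mul_le_mul_of_nonneg_right ?_ (by positivity)
    linarith [mul_le_mul_of_nonneg_right hy.2 hz.1, mul_nonneg (hy.1.trans hy.2) hy.1]
  have hbalance : lam * (κ * (y + z)) = (L * M + G + h * M / τ) * (y + z) := by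
    rw [← hκ]
    ring
  linarith [mul_nonneg hG hy.1, (by ring : h * (y + z) * (M / τ) = h * M / τ * (y + z))]

theorem mixedDiff_le_mixedBarrier (hw : IsClassicalSol T a (fun _ _ => 0) g w wx wxx wt)
    (hlam : 0 < lam) (ha : ∀ x, ∀ t ∈ Icc 0 T, a x t ∈ Icc lam R) (haL : SlabLipschitz T L a)
    (hG : 0 ≤ G) (hh : 0 < h) (hτ : 0 < τ) (hτt : 0 < t₀ - τ) (ht₀ : t₀ ≤ T)
    (hlip : SlabLipschitz T Λ w)
    (hM : ∀ x, |x - x₀| ≤ 2 * h → ∀ t ∈ Icc (t₀ - τ) t₀, |wxx x t| ≤ M)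
    (hg : ∀ x y, |x - x₀| ≤ 2 * h → |y - x₀| ≤ 2 * h → ∀ t ∈ Icc (t₀ - τ) t₀,
      |g x t - g y t| ≤ G * |x - y|)
    (hκ₀ : 0 ≤ κ) (hκ : κ * lam = L * M + G + h * M / τ)
    (hy : y ∈ Icc 0 h) (hz : z ∈ Icc 0 h) (ht : t ∈ Icc (t₀ - τ) t₀) :
    mixedDiff (fun p => w p t) x₀ y z ≤ mixedBarrier M κ Λ h τ t₀ y z t := by
  have hT : 0 ≤ T := by linarith
  have hM₀ : 0 ≤ M := (abs_nonneg _).trans (hM x₀ (by simp [hh.le]) t ht)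
  have htime {t : ℝ} (ht : t ∈ Icc (t₀ - τ) t₀) : t ∈ Ioc 0 T :=
    ⟨hτt.trans_le ht.1, ht.2.trans ht₀⟩
  set D : Set (ℝ × ℝ × ℝ) := Icc 0 h ×ˢ Icc 0 h ×ˢ Icc (t₀ - τ) t₀
  have hDT (p : ℝ × ℝ × ℝ) (hp : p ∈ D) : p.2.2 ∈ Icc 0 T := Ioc_subset_Icc_self (htime hp.2.2)
  have hcompact : IsCompact D := isCompact_Icc.prod (isCompact_Icc.prod isCompact_Icc)
  have hcont : ContinuousOn (fun p : ℝ × ℝ × ℝ => mixedDiff (fun q => w q p.2.2) x₀ p.1 p.2.1 -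
      mixedBarrier M κ Λ h τ t₀ p.1 p.2.1 p.2.2) D :=
    ((hw.continuousOn_mixedDiff x₀).mono hDT).sub (by unfold mixedBarrier; fun_prop)
  refine sub_nonpos.1 (nonpos_of_isSubsolutionAt
    (hlam.le.trans ((ha 0 0 ⟨le_rfl, hT⟩).1.trans (ha 0 0 ⟨le_rfl, hT⟩).2)) hcompact.isClosed hDT
    hcont (hcompact.bddAbove_image hcont) ?_ (y, z, t) ⟨hy, hz, ht⟩)
  rintro y z t ⟨hy : y ∈ Icc 0 h, hz : z ∈ Icc 0 h, ht : t ∈ Icc (t₀ - τ) t₀⟩ hpos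
  have htT := htime ht
  have htT' := Ioc_subset_Icc_self htT
  have hlt : mixedBarrier M κ Λ h τ t₀ y z t < mixedDiff (fun p => w p t) x₀ y z := sub_pos.1 hpos
  have hyI := mem_Ioo_of_mixedBarrier_lt (fun p q => hlip p q t htT') hM₀ hκ₀ hτ hh hy hz ht.2 hlt
  have hzI := mem_Ioo_of_mixedBarrier_lt (fun p q => hlip p q t htT') hM₀ hκ₀ hτ hh hz hy ht.2
    (by rwa [mixedBarrier_comm, mixedDiff_comm])
  have hts : t₀ - τ < t := by
    refine ht.1.lt_of_ne ?_
    rintro rfl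
    have hinit := mixedDiff_le_of_abs_second_deriv_le (x := x₀)
      (fun p => hw.hasDerivAt_x p _ htT) (fun p => hw.hasDerivAt_xx p _ htT)
      (fun p hp => hM p (by linarith [hy.2, hz.2]) _ ht) hy.1 hz.1
    exact (hinit.trans (mul_le_mixedBarrier_initial hκ₀ (hlip.nonneg hT) hτ hh hy hz)).not_gt hlt
  refine ⟨⟨?_, ?_, ?_⟩, hw.isSubsolutionAt_mixedDiff hlam (ha x₀ t htT')
    (fun p => haL p x₀ t htT') (haL.nonneg hT) hG hM₀ hτ (fun p hp => hM p hp t ht)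
    (fun p q hp hq => hg p q hp hq t ht) hκ₀ hκ htT hy hz⟩
  · filter_upwards [Icc_mem_nhds hyI.1 hyI.2] with y' hy' using ⟨hy', hz, ht⟩
  · filter_upwards [Icc_mem_nhds hzI.1 hzI.2] with z' hz' using ⟨hy, hz', ht⟩
  · filter_upwards [Ioo_mem_nhdsLT hts] with s hs using ⟨hy, hz, hs.1.le, hs.2.le.trans ht.2⟩

theorem second_deriv_le_local (hw : IsClassicalSol T a (fun _ _ => 0) g w wx wxx wt)
    (hlam : 0 < lam) (ha : ∀ x, ∀ t ∈ Icc 0 T, a x t ∈ Icc lam R) (haL : SlabLipschitz T L a)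
    (hG : 0 ≤ G) (hh : 0 < h) (hτ : 0 < τ) (hτt : 0 < t₀ - τ) (ht₀ : t₀ ≤ T)
    (hlip : SlabLipschitz T Λ w)
    (hM : ∀ x, |x - x₀| ≤ 2 * h → ∀ t ∈ Icc (t₀ - τ) t₀, |wxx x t| ≤ M)
    (hg : ∀ x y, |x - x₀| ≤ 2 * h → |y - x₀| ≤ 2 * h → ∀ t ∈ Icc (t₀ - τ) t₀,
      |g x t - g y t| ≤ G * |x - y|) :
    wxx x₀ t₀ ≤ (L * M + G + h * M / τ) / lam * (2 * h) + Λ / h := by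
  have hfinal : t₀ ∈ Icc (t₀ - τ) t₀ := ⟨by linarith, le_rfl⟩
  have ht₀' : t₀ ∈ Ioc 0 T := ⟨by linarith, ht₀⟩
  have hM₀ : 0 ≤ M := (abs_nonneg _).trans (hM x₀ (by simp [hh.le]) t₀ hfinal)
  have hL := haL.nonneg (ht₀'.1.le.trans ht₀)
  have hκ : 0 ≤ (L * M + G + h * M / τ) / lam := by positivity
  refine second_deriv_le_of_mixedDiff_le hh (fun p => hw.hasDerivAt_x p t₀ ht₀')
    (hw.hasDerivAt_xx x₀ t₀ ht₀') fun y hy z hz => ?_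
  exact (hw.mixedDiff_le_mixedBarrier hlam ha haL hG hh hτ hτt ht₀ hlip hM hg hκ
    (div_mul_cancel₀ _ hlam.ne') (Ioo_subset_Icc_self hy) (Ioo_subset_Icc_self hz) hfinal).trans
    (mixedBarrier_final_le hκ hy.1.le hz.1.le)

end IsClassicalSol

end LocalSecondDerivative

section Doubling

open Set Filter Topology

variable {T C x₁ t₁ : ℝ} {φ : ℝ → ℝ → ℝ}

/-- The parabolic distance, up to a constant factor, from `p` to the lateral and initial boundary of
the box of half-width `√T` around `x₁` that starts at the time `3 t₁ / 4`; it is nonpositive outside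
the box. -/
noncomputable def boxDist (T x₁ t₁ : ℝ) (p : ℝ × ℝ) : ℝ :=
  min √(p.2 - 3 * t₁ / 4) (√T - |p.1 - x₁|)

theorem sqrt_eq_two_mul_boxDist (ht₁ : t₁ ≤ T) : √t₁ = 2 * boxDist T x₁ t₁ (x₁, t₁) := by
  have hquarter : √(t₁ - 3 * t₁ / 4) = √t₁ / 2 := by
    rw [show t₁ - 3 * t₁ / 4 = t₁ / 2 ^ 2 by ring, Real.sqrt_div' _ (by norm_num),
      Real.sqrt_sq (by norm_num)]
  have hT : √t₁ ≤ √T := Real.sqrt_le_sqrt ht₁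
  rw [boxDist, sub_self, abs_zero, sub_zero, hquarter,
    min_eq_left (by linarith [Real.sqrt_nonneg t₁])]
  ring

theorem boxDist_sq_le {p : ℝ × ℝ} (hp : 0 ≤ boxDist T x₁ t₁ p) (ht : 3 * t₁ / 4 ≤ p.2) :
    boxDist T x₁ t₁ p ^ 2 ≤ p.2 - 3 * t₁ / 4 := by
  rw [← Real.sq_sqrt (sub_nonneg.2 ht)]
  exact pow_le_pow_left₀ hp (min_le_left _ _) 2

theorem half_boxDist_le {x x₀ t t₀ : ℝ} (hpos : 0 < boxDist T x₁ t₁ (x₀, t₀))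
    (ht₀ : 3 * t₁ / 4 ≤ t₀) (hx : |x - x₀| ≤ boxDist T x₁ t₁ (x₀, t₀) / 2)
    (ht : t₀ - boxDist T x₁ t₁ (x₀, t₀) ^ 2 / 2 ≤ t) :
    boxDist T x₁ t₁ (x₀, t₀) / 2 ≤ boxDist T x₁ t₁ (x, t) := by
  refine le_min (Real.le_sqrt_of_sq_le ?_) ?_
  · linarith [boxDist_sq_le hpos.le ht₀, sq_nonneg (boxDist T x₁ t₁ (x₀, t₀)),
      div_pow (boxDist T x₁ t₁ (x₀, t₀)) 2 2]
  · have hx₀ : boxDist T x₁ t₁ (x₀, t₀) ≤ √T - |x₀ - x₁| := min_le_right _ _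
    linarith [abs_sub_le x x₀ x₁]

theorem sqrt_mul_le_of_doubling (hC : 0 ≤ C)
    (hφ : ContinuousOn (fun p : ℝ × ℝ => φ p.1 p.2) {p | p.2 ∈ Ioc 0 T}) (hφ₀ : ∀ x t, 0 ≤ φ x t)
    (hdoubling : ∀ x₀, ∀ t₀ ≤ T, ∀ ω, 0 < ω → ω ^ 2 < t₀ →
      (∀ x, |x - x₀| ≤ ω / 2 → ∀ t ∈ Icc (t₀ - ω ^ 2 / 2) t₀, φ x t ≤ 2 * φ x₀ t₀) →
      ω * φ x₀ t₀ ≤ C) (x₁ : ℝ) (ht₁ : t₁ ∈ Ioc 0 T) : √t₁ * φ x₁ t₁ ≤ 2 * C := by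
  set ω := boxDist T x₁ t₁
  have hω : Continuous ω := by unfold ω boxDist; fun_prop
  set K : Set (ℝ × ℝ) := Icc (x₁ - √T) (x₁ + √T) ×ˢ Icc (3 * t₁ / 4) T
  have hK₁ : (x₁, t₁) ∈ K :=
    ⟨⟨by linarith [Real.sqrt_nonneg T], by linarith [Real.sqrt_nonneg T]⟩,
      by linarith [ht₁.1], ht₁.2⟩
  have hKpos {p : ℝ × ℝ} (hp : p ∈ K) : p.2 ∈ Ioc 0 T := ⟨by linarith [ht₁.1, hp.2.1], hp.2.2⟩
  obtain ⟨⟨x₀, t₀⟩, hp₀, hmax⟩ := (isCompact_Icc.prod isCompact_Icc).exists_isMaxOn ⟨_, hK₁⟩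
    (hω.continuousOn.mul (hφ.mono fun p hp => hKpos hp))
  have hle {p : ℝ × ℝ} (hp : p ∈ K) : ω p * φ p.1 p.2 ≤ ω (x₀, t₀) * φ x₀ t₀ := hmax hp
  rw [sqrt_eq_two_mul_boxDist (x₁ := x₁) ht₁.2, mul_assoc]
  refine mul_le_mul_of_nonneg_left ((hle hK₁).trans ?_) zero_le_two
  rcases le_or_gt (ω (x₀, t₀)) 0 with hneg | hpos
  · exact (mul_nonpos_of_nonpos_of_nonneg hneg (hφ₀ x₀ t₀)).trans hC
  have ht₀ : 3 * t₁ / 4 ≤ t₀ := hp₀.2.1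
  have hsq : ω (x₀, t₀) ^ 2 ≤ t₀ - 3 * t₁ / 4 := boxDist_sq_le hpos.le ht₀
  refine hdoubling x₀ t₀ hp₀.2.2 _ hpos (by linarith [ht₁.1]) fun x hx t ht => ?_
  have hhalf : ω (x₀, t₀) / 2 ≤ ω (x, t) := half_boxDist_le hpos ht₀ hx ht.1
  have hwidth : ω (x, t) ≤ √T - |x - x₁| := min_le_right _ _
  have hx₁ := abs_le.1 (show |x - x₁| ≤ √T by linarith)
  have hmem : (x, t) ∈ K := ⟨⟨by linarith [hx₁.1], by linarith [hx₁.2]⟩,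
    by linarith [ht.1, sq_nonneg (ω (x₀, t₀))], ht.2.trans hp₀.2.2⟩
  refine le_of_mul_le_mul_left ?_ (half_pos hpos)
  linarith [hle hmem, mul_le_mul_of_nonneg_right hhalf (hφ₀ x t)]

end Doubling

section InteriorEstimate

open Set Filter Topology

variable {T R lam Lf Λ M m r δ ω x y t x₀ t₀ : ℝ} {a b f w wx wxx wt : ℝ → ℝ → ℝ}

theorem IsClassicalSol.abs_drift_source_sub_le (hw : IsClassicalSol T a b f w wx wxx wt)
    (hb : SlabBounded T R b) (hbL : SlabLipschitz T R b) (hf : SlabLipschitz T Lf f)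
    (hlip : SlabLipschitz T Λ w) (ht : t ∈ Ioc 0 T) (hM : ∀ p, |p - x₀| ≤ r → |wxx p t| ≤ M)
    (hx : |x - x₀| ≤ r) (hy : |y - x₀| ≤ r) :
    |f x t - b x t * wx x t - (f y t - b y t * wx y t)| ≤ (Lf + R * Λ + R * M) * |x - y| := by
  have ht' := Ioc_subset_Icc_self ht
  have hR : 0 ≤ R := hb.nonneg (ht.1.le.trans ht.2)
  have hcoeff : |(b x t - b y t) * wx x t| ≤ R * |x - y| * Λ := by
    rw [abs_mul]
    exact mul_le_mul (hbL x y t ht') (hw.abs_deriv_le hlip x ht) (abs_nonneg _) (by positivity)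
  have hslope : |b y t * (wx x t - wx y t)| ≤ R * (M * |x - y|) := by
    rw [abs_mul]
    exact mul_le_mul (hb y t ht')
      (abs_sub_le_of_abs_deriv_le (fun p => hw.hasDerivAt_xx p t ht) hM hx hy) (abs_nonneg _) hR
  calc |f x t - b x t * wx x t - (f y t - b y t * wx y t)|
      = |f x t - f y t - ((b x t - b y t) * wx x t + b y t * (wx x t - wx y t))| := by ring_nf
    _ ≤ Lf * |x - y| + (R * |x - y| * Λ + R * (M * |x - y|)) :=
      (abs_sub _ _).trans (add_le_add (hf x y t ht')
        ((abs_add_le _ _).trans (add_le_add hcoeff hslope)))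
    _ = (Lf + R * Λ + R * M) * |x - y| := by ring

/-- The reciprocal of the ratio between the size of the box used by the local estimate and the size
of the box in which `w_xx` has doubled. It is large enough for the local estimate to be absorbed. -/
noncomputable def absorbRatio (T R lam : ℝ) : ℝ := 4 + 16 * (R * √T + 1) / lam

theorem four_le_absorbRatio (hR : 0 ≤ R) (hlam : 0 < lam) : 4 ≤ absorbRatio T R lam :=
  le_add_of_nonneg_right (by positivity)

/-- The constant in the interior estimate of the second derivative. -/
noncomputable def interiorConst (T R lam : ℝ) : ℝ :=
  2 * (T * (1 + R) / lam + 2 * absorbRatio T R lam)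

theorem interiorConst_nonneg (hT : 0 ≤ T) (hR : 0 ≤ R) (hlam : 0 < lam) :
    0 ≤ interiorConst T R lam := by
  have := four_le_absorbRatio (T := T) hR hlam
  unfold interiorConst
  positivity

theorem mul_le_of_local_estimate (hlam : 0 < lam) (hR : 0 ≤ R) (hω : 0 < ω) (hωT : ω ^ 2 ≤ T)
    (hm : 0 ≤ m) (hLf : 0 ≤ Lf) (hΛ : 0 ≤ Λ) (hδ : δ = (absorbRatio T R lam)⁻¹)
    (hlocal : m ≤ (R * (2 * m) + (Lf + R * Λ + R * (2 * m)) + δ * ω * (2 * m) / (ω ^ 2 / 2)) / lam *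
      (2 * (δ * ω)) + Λ / (δ * ω)) :
    ω * m ≤ interiorConst T R lam / 2 * (Lf + Λ) := by
  have hk := four_le_absorbRatio (T := T) hR hlam
  have hk₀ : 0 < absorbRatio T R lam := by linarith
  have hδ₀ : 0 < δ := hδ ▸ inv_pos.2 hk₀
  have hδ₄ : δ ≤ 1 / 4 := by
    rw [hδ, ← one_div]
    exact one_div_le_one_div_of_le (by norm_num) hk
  have hδlam : δ * (16 * (R * √T + 1)) ≤ lam := by
    rw [hδ, inv_mul_le_iff₀ hk₀, absorbRatio, add_mul, div_mul_cancel₀ _ hlam.ne']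
    linarith
  have hexpand : ω * m ≤ (8 * δ * (R * ω + δ) * (ω * m)) / lam +
      2 * δ * ω ^ 2 * (Lf + R * Λ) / lam + Λ / δ := by
    refine (mul_le_mul_of_nonneg_left hlocal hω.le).trans_eq ?_
    field_simp
    ring
  have habsorb : (8 * δ * (R * ω + δ) * (ω * m)) / lam ≤ ω * m / 2 := by
    have hsize : R * ω + δ ≤ R * √T + 1 := by
      linarith [mul_le_mul_of_nonneg_left (Real.le_sqrt_of_sq_le hωT) hR]
    rw [div_le_div_iff₀ hlam two_pos]
    linarith [mul_le_mul_of_nonneg_right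
      (show 16 * (δ * (R * ω + δ)) ≤ lam by linarith [mul_le_mul_of_nonneg_left hsize hδ₀.le])
      (show 0 ≤ ω * m by positivity)]
  have hT : 0 ≤ T := (sq_nonneg ω).trans hωT
  have hsource : 2 * δ * ω ^ 2 * (Lf + R * Λ) / lam ≤ T * (1 + R) / lam / 2 * (Lf + Λ) := by
    have hsum : Lf + R * Λ ≤ (1 + R) * (Lf + Λ) := by linarith [mul_nonneg hR hLf]
    calc 2 * δ * ω ^ 2 * (Lf + R * Λ) / lam ≤ 2 * (1 / 4) * T * ((1 + R) * (Lf + Λ)) / lam := by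
          gcongr
      _ = T * (1 + R) / lam / 2 * (Lf + Λ) := by ring
  have hlast : Λ / δ ≤ absorbRatio T R lam * (Lf + Λ) := by
    rw [hδ, div_inv_eq_mul, mul_comm]
    exact mul_le_mul_of_nonneg_left (by linarith) hk₀.le
  rw [interiorConst]
  linarith

theorem IsClassicalSol.second_deriv_le_of_doubled (hw : IsClassicalSol T a b f w wx wxx wt)
    (hab : IsAdmissible T lam R a b) (hlam : 0 < lam) (haL : SlabLipschitz T R a)
    (hf : SlabLipschitz T Lf f) (hlip : SlabLipschitz T Λ w) (hω : 0 < ω) (hδ : 0 < δ)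
    (hωt : ω ^ 2 < t₀) (ht₀ : t₀ ≤ T)
    (hM : ∀ x, |x - x₀| ≤ 2 * (δ * ω) → ∀ t ∈ Icc (t₀ - ω ^ 2 / 2) t₀, |wxx x t| ≤ M) :
    wxx x₀ t₀ ≤ (R * M + (Lf + R * Λ + R * M) + δ * ω * M / (ω ^ 2 / 2)) / lam * (2 * (δ * ω)) +
      Λ / (δ * ω) := by
  have hτ : 0 < ω ^ 2 / 2 := by positivity
  have hT : 0 ≤ T := by linarith
  have hR : 0 ≤ R := hab.drift_bounded.nonneg hT
  have hLf := hf.nonneg hT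
  have hΛ := hlip.nonneg hT
  have hM₀ : 0 ≤ M :=
    (abs_nonneg _).trans (hM x₀ (by rw [sub_self, abs_zero]; positivity) t₀ ⟨by linarith, le_rfl⟩)
  refine hw.drift_to_source.second_deriv_le_local hlam hab.mem_Icc haL (by positivity)
    (by positivity) hτ (by linarith) ht₀ hlip hM fun x y hx hy t ht => ?_
  exact hw.abs_drift_source_sub_le hab.drift_bounded hab.drift_lipschitz hf hlip
    ⟨by linarith [ht.1], ht.2.trans ht₀⟩ (fun p hp => hM p hp t ht) hx hy

theorem IsClassicalSol.invSqrtBounded_second_deriv (hw : IsClassicalSol T a b f w wx wxx wt)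
    (hcont : ContinuousOn (fun p : ℝ × ℝ => wxx p.1 p.2) {p | p.2 ∈ Ioc 0 T})
    (hab : IsAdmissible T lam R a b) (hlam : 0 < lam) (haL : SlabLipschitz T R a)
    (hf : SlabLipschitz T Lf f) (hlip : SlabLipschitz T Λ w) :
    InvSqrtBounded T (interiorConst T R lam * (Lf + Λ)) wxx := by
  intro x t ht
  have hT : 0 ≤ T := ht.1.le.trans ht.2
  have hR : 0 ≤ R := hab.drift_bounded.nonneg hT
  have hLf := hf.nonneg hT
  have hΛ := hlip.nonneg hT
  have hk := four_le_absorbRatio (T := T) hR hlam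
  have hC := interiorConst_nonneg hT hR hlam
  rw [le_div_iff₀' (Real.sqrt_pos.2 ht.1)]
  refine (sqrt_mul_le_of_doubling (φ := fun x t => |wxx x t|)
    (C := interiorConst T R lam / 2 * (Lf + Λ)) (by positivity) hcont.abs (fun _ _ => abs_nonneg _)
    (fun x₀ t₀ ht₀ ω hω hωt hbox => ?_) x ht).trans_eq (by ring)
  set δ := (absorbRatio T R lam)⁻¹ with hδ
  have hδ₀ : 0 < δ := inv_pos.2 (by linarith)
  have hbox' (x : ℝ) (hx : |x - x₀| ≤ 2 * (δ * ω)) : |x - x₀| ≤ ω / 2 := by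
    have hδ₄ : δ ≤ 1 / 4 := by
      rw [hδ, ← one_div]
      exact one_div_le_one_div_of_le (by norm_num) hk
    linarith [mul_le_mul_of_nonneg_right hδ₄ hω.le]
  refine mul_le_of_local_estimate hlam hR hω (hωt.le.trans ht₀) (abs_nonneg _) hLf hΛ hδ
    (abs_le'.2 ⟨?_, ?_⟩)
  · exact hw.second_deriv_le_of_doubled hab hlam haL hf hlip hω hδ₀ hωt ht₀
      fun x hx t ht => hbox x (hbox' x hx) t ht
  · exact hw.neg.second_deriv_le_of_doubled hab hlam haL hf.neg hlip.neg hω hδ₀ hωt ht₀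
      fun x hx t ht => (abs_neg _).trans_le (hbox x (hbox' x hx) t ht)

end InteriorEstimate

section Norms

open Set Filter Topology

variable {T R lam C L C' L' : ℝ} {v w a b abar bbar f u : ℝ → ℝ → ℝ} {g : ℝ → ℝ}

theorem HolderClass.exists_inC (h : HolderClass {p : ℝ × ℝ | 0 ≤ p.2 ∧ p.2 ≤ T} 1 v) :
    ∃ C, inC T C C v := by
  obtain ⟨C, hbdd, hmod⟩ := h
  refine ⟨C, fun x t h₀ hT => hbdd (x, t) ⟨h₀, hT⟩, fun x t x' t' h₀ hT h₀' hT' => ?_⟩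
  simpa only [Real.rpow_one] using hmod (x, t) ⟨h₀, hT⟩ (x', t') ⟨h₀', hT'⟩

theorem inC.sub (hv : inC T C L v) (hw : inC T C' L' w) :
    inC T (C + C') (L + L') fun x t => v x t - w x t := by
  refine ⟨fun x t h₀ hT => (abs_sub _ _).trans (add_le_add (hv.1 x t h₀ hT) (hw.1 x t h₀ hT)),
    fun x t x' t' h₀ hT h₀' hT' => ?_⟩
  rw [sub_sub_sub_comm, add_mul]
  exact (abs_sub _ _).trans
    (add_le_add (hv.2 x t x' t' h₀ hT h₀' hT') (hw.2 x t x' t' h₀ hT h₀' hT'))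

theorem inC.slabBounded (hv : inC T C L v) : SlabBounded T C v :=
  fun x t ht => hv.1 x t ht.1 ht.2

theorem inC.slabLipschitz (hv : inC T C L v) : SlabLipschitz T L v := by
  intro x y t ht
  have h := hv.2 x t y t ht.1 ht.2 ht.1 ht.2
  rwa [sub_self, abs_zero, Real.zero_rpow (by norm_num), add_zero] at h

theorem inC.continuousOn (hv : inC T C L v) :
    ContinuousOn (fun p : ℝ × ℝ => v p.1 p.2) {p | p.2 ∈ Icc 0 T} := by
  intro p hp
  have hmodulus : Continuous fun q : ℝ × ℝ => L * (|q.1 - p.1| + |q.2 - p.2| ^ (1 / 2 : ℝ)) := by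
    have : Continuous fun q : ℝ × ℝ => |q.2 - p.2| ^ (1 / 2 : ℝ) :=
      .rpow_const (by fun_prop) fun _ => .inr (by norm_num)
    fun_prop
  have hlim := (hmodulus.tendsto p).mono_left (nhdsWithin_le_nhds (s := {p | p.2 ∈ Icc 0 T}))
  simp only [sub_self, abs_zero, Real.zero_rpow (by norm_num : (1 / 2 : ℝ) ≠ 0), add_zero,
    mul_zero] at hlim
  refine tendsto_iff_dist_tendsto_zero.2 (squeeze_zero' (.of_forall fun _ => dist_nonneg) ?_ hlim)
  filter_upwards [self_mem_nhdsWithin] with q hq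
  exact hv.2 q.1 q.2 p.1 p.2 hq.1 hq.2 hp.1 hp.2

theorem norm11_sup_nonneg : 0 ≤ sSup {r : ℝ | ∃ x t, 0 ≤ t ∧ t ≤ T ∧ r = |v x t|} := by
  refine Real.sSup_nonneg ?_
  rintro r ⟨x, t, -, -, rfl⟩
  exact abs_nonneg _

theorem norm11_seminorm_nonneg :
    0 ≤ sSup {r : ℝ | ∃ x t x' t', 0 ≤ t ∧ t ≤ T ∧ 0 ≤ t' ∧ t' ≤ T ∧ ¬(x = x' ∧ t = t') ∧
      r = |v x t - v x' t'| / (|x - x'| + |t - t'| ^ (1 / 2 : ℝ))} := by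
  refine Real.sSup_nonneg ?_
  rintro r ⟨x, t, x', t', -, -, -, -, -, rfl⟩
  positivity

theorem norm11_nonneg : 0 ≤ norm11 T v :=
  add_nonneg norm11_sup_nonneg norm11_seminorm_nonneg

theorem abs_sub_add_rpow_pos {x t x' t' : ℝ} (h : ¬(x = x' ∧ t = t')) :
    0 < |x - x'| + |t - t'| ^ (1 / 2 : ℝ) := by
  rcases not_and_or.1 h with hx | ht
  · exact add_pos_of_pos_of_nonneg (abs_pos.2 (sub_ne_zero.2 hx)) (by positivity)
  · exact add_pos_of_nonneg_of_pos (abs_nonneg _)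
      (Real.rpow_pos_of_pos (abs_pos.2 (sub_ne_zero.2 ht)) _)

theorem inC.inC_norm11 (hv : inC T C L v) : inC T (norm11 T v) (norm11 T v) v := by
  refine ⟨fun x t h₀ hT => ?_, fun x t x' t' h₀ hT h₀' hT' => ?_⟩
  · refine le_add_of_le_of_nonneg (le_csSup ⟨C, ?_⟩ ⟨x, t, h₀, hT, rfl⟩) norm11_seminorm_nonneg
    rintro r ⟨x, t, h₀, hT, rfl⟩
    exact hv.1 x t h₀ hT
  · by_cases h : x = x' ∧ t = t'
    · simp [h.1, h.2]
    rw [← div_le_iff₀ (abs_sub_add_rpow_pos h)]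
    refine le_add_of_nonneg_of_le norm11_sup_nonneg
      (le_csSup ⟨L, ?_⟩ ⟨x, t, x', t', h₀, hT, h₀', hT', h, rfl⟩)
    rintro r ⟨x, t, x', t', h₀, hT, h₀', hT', hne, rfl⟩
    exact (div_le_iff₀ (abs_sub_add_rpow_pos hne)).2 (hv.2 x t x' t' h₀ hT h₀' hT')

theorem norm11_le (hT : 0 ≤ T) (hv : inC T C L v) : norm11 T v ≤ C + L := by
  refine add_le_add (Real.sSup_le ?_ (hv.slabBounded.nonneg hT))
    (Real.sSup_le ?_ (hv.slabLipschitz.nonneg hT))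
  · rintro r ⟨x, t, h₀, hT, rfl⟩
    exact hv.1 x t h₀ hT
  · rintro r ⟨x, t, x', t', h₀, hT, h₀', hT', hne, rfl⟩
    exact (div_le_iff₀ (abs_sub_add_rpow_pos hne)).2 (hv.2 x t x' t' h₀ hT h₀' hT')

theorem norm1_eq_norm11 (g : ℝ → ℝ) : norm1 g = norm11 0 fun x _ => g x := by
  unfold norm1 norm11
  congr 2
  · ext r
    exact ⟨fun ⟨x, hr⟩ => ⟨x, 0, le_rfl, le_rfl, hr⟩, fun ⟨x, _, _, _, hr⟩ => ⟨x, hr⟩⟩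
  · ext r
    constructor
    · rintro ⟨x, x', hne, rfl⟩
      exact ⟨x, 0, x', 0, le_rfl, le_rfl, le_rfl, le_rfl, fun h => hne h.1, by norm_num⟩
    · rintro ⟨x, t, x', t', h₀, hT, h₀', hT', hne, rfl⟩
      obtain rfl := le_antisymm hT h₀
      obtain rfl := le_antisymm hT' h₀'
      exact ⟨x, x', fun h => hne ⟨h, rfl⟩, by norm_num⟩

theorem inC.initial_bounds (hT : 0 ≤ T) (hv : inC T C L v) (hg : ∀ x, v x 0 = g x) :
    (∀ x, |v x 0| ≤ norm1 g) ∧ ∀ x y, |v x 0 - v y 0| ≤ norm1 g * |x - y| := by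
  have hv₀ : inC 0 C L fun x _ => v x 0 := by
    refine ⟨fun x _ _ _ => hv.1 x 0 le_rfl hT, fun x t x' t' _ _ _ _ => ?_⟩
    exact (hv.slabLipschitz x x' 0 ⟨le_rfl, hT⟩).trans (mul_le_mul_of_nonneg_left
      (le_add_of_nonneg_right (by positivity)) (hv.slabLipschitz.nonneg hT))
  have h := hv₀.inC_norm11
  simp only [hg, ← norm1_eq_norm11] at h ⊢
  exact ⟨fun x => h.slabBounded x 0 ⟨le_rfl, le_rfl⟩,
    fun x y => h.slabLipschitz x y 0 ⟨le_rfl, le_rfl⟩⟩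

theorem memB.isAdmissible (h : memB T R lam a b) : IsAdmissible T lam R a b := by
  obtain ⟨hlam, ⟨A, A', -, hA', hA, ha⟩, ⟨B, B', hB₀, hB', hB, hb⟩⟩ := h
  refine ⟨fun x t ht => ⟨hlam x t ht.1 ht.2, ?_⟩, fun x t ht => ?_, fun x y t ht => ?_⟩
  · linarith [le_abs_self (a x t), ha.1 x t ht.1 ht.2]
  · linarith [hb.1 x t ht.1 ht.2]
  · exact (hb.slabLipschitz x y t ht).trans (by gcongr; linarith)

theorem memB.slabLipschitz (h : memB T R lam a b) : SlabLipschitz T R a := by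
  obtain ⟨-, ⟨A, A', hA₀, -, hA, ha⟩, -⟩ := h
  exact fun x y t ht => (ha.slabLipschitz x y t ht).trans (by gcongr; linarith)

theorem memB.slabBounded_sub (h : memB T R lam a b)
    (hbar : memB T R lam abar bbar) :
    SlabBounded T (vDist T a b abar bbar) (fun x t => a x t - abar x t) ∧
      SlabBounded T (vDist T a b abar bbar) (fun x t => b x t - bbar x t) := by
  obtain ⟨-, ⟨_, _, -, -, -, ha⟩, ⟨_, _, -, -, -, hb⟩⟩ := h
  obtain ⟨-, ⟨_, _, -, -, -, ha'⟩, ⟨_, _, -, -, -, hb'⟩⟩ := hbar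
  exact ⟨fun x t ht => ((ha.sub ha').inC_norm11.slabBounded x t ht).trans (le_max_left _ _),
    fun x t ht => ((hb.sub hb').inC_norm11.slabBounded x t ht).trans (le_max_right _ _)⟩

theorem vDist_nonneg : 0 ≤ vDist T a b abar bbar :=
  norm11_nonneg.trans (le_max_left _ _)

theorem IsSolLin.exists_inC (h : IsSolLin T a b f g u) : ∃ C, inC T C C u :=
  h.2.1.exists_inC

theorem IsSolLin.isClassicalSol (h : IsSolLin T a b f g u) :
    IsClassicalSol T a b f u (pdX u) (pdXX u) (pdT u) := by
  obtain ⟨C, hC⟩ := h.exists_inC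
  obtain ⟨⟨hdiff, -⟩, -, -, heq⟩ := h
  exact {
    continuousOn := hC.continuousOn
    bounded := ⟨C, hC.slabBounded⟩
    hasDerivAt_x := fun x t ht => (hdiff (x, t) ht).1.hasDerivAt
    hasDerivAt_xx := fun x t ht => (hdiff (x, t) ht).2.1.hasDerivAt
    hasDerivAt_t := fun x t ht => (hdiff (x, t) ht).2.2.hasDerivAt
    equation := fun x t ht => by linarith [heq x t ht.1 ht.2] }

theorem IsSolLin.continuousOn_pdXX (h : IsSolLin T a b f g u) :
    ContinuousOn (fun p : ℝ × ℝ => pdXX u p.1 p.2) {p | p.2 ∈ Ioc 0 T} :=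
  h.1.2.2.2.1

end Norms

section CauchyEstimate

open Set

variable {T R lam G M F D H Λ : ℝ} {a b f g w wx wxx wt a' b' f' : ℝ → ℝ → ℝ}

/-- The constant in the estimate of the modulus of continuity in time of a solution. -/
noncomputable def timeConst (T R lam : ℝ) : ℝ := lipConst T R lam * (1 + R + 2 * R * √T) + 2

/-- The constant in the `C^{1,1/2}` estimate of a solution. -/
noncomputable def cauchyConst (T R lam : ℝ) : ℝ :=
  1 + timeConst T R lam * √T + (lipConst T R lam + timeConst T R lam)

theorem timeConst_nonneg (hR : 0 ≤ R) (hlam : 0 < lam) : 0 ≤ timeConst T R lam := by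
  have := lipConst_nonneg (T := T) (R := R) hlam
  unfold timeConst
  positivity

theorem cauchyConst_pos (hR : 0 ≤ R) (hlam : 0 < lam) : 0 < cauchyConst T R lam := by
  have := lipConst_nonneg (T := T) (R := R) hlam
  have := timeConst_nonneg (T := T) hR hlam
  unfold cauchyConst
  positivity

namespace IsClassicalSol

theorem abs_sub_time_le (hw : IsClassicalSol T a b g w wx wxx wt)
    (hab : IsAdmissible T lam R a b) (hlam : 0 < lam) (hT : 0 < T) (hg : InvSqrtBounded T G g)
    (hinit : ∀ x y, |w x 0 - w y 0| ≤ M * |x - y|) (x : ℝ) {s t : ℝ} (hs : s ∈ Icc 0 T)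
    (ht : t ∈ Icc 0 T) : |w x s - w x t| ≤ timeConst T R lam * (M + G) * √|s - t| := by
  have hM : 0 ≤ M := by simpa using (abs_nonneg _).trans (hinit 1 0)
  have hlip := hw.slabLipschitz hab hlam hT hg hinit
  refine (hw.drift_to_source.abs_sub_le_mul_sqrt
    (hg.sub (hw.invSqrtBounded_drift hlip hab.drift_bounded))
    (fun x t ht => ⟨hlam.le.trans (hab.mem_Icc x t ht).1, (hab.mem_Icc x t ht).2⟩) hlip x hs
    ht).trans (mul_le_mul_of_nonneg_right ?_ (Real.sqrt_nonneg _))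
  rw [timeConst]
  linarith

theorem inC_of_invSqrtBounded (hw : IsClassicalSol T a b g w wx wxx wt)
    (hab : IsAdmissible T lam R a b) (hlam : 0 < lam) (hT : 0 < T) (hg : InvSqrtBounded T G g)
    (hinit₀ : ∀ x, |w x 0| ≤ M) (hinit : ∀ x y, |w x 0 - w y 0| ≤ M * |x - y|) :
    inC T ((1 + timeConst T R lam * √T) * (M + G))
      ((lipConst T R lam + timeConst T R lam) * (M + G)) w := by
  have hG := hg.nonneg hT
  have hMG : 0 ≤ M + G := add_nonneg ((abs_nonneg _).trans (hinit₀ 0)) hG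
  have hΛ := mul_nonneg (lipConst_nonneg (T := T) (R := R) hlam) hMG
  have hH := mul_nonneg (timeConst_nonneg (T := T) (hab.drift_bounded.nonneg hT.le) hlam) hMG
  have htime (x : ℝ) {s t : ℝ} (hs : s ∈ Icc 0 T) (ht : t ∈ Icc 0 T) :=
    hw.abs_sub_time_le hab hlam hT hg hinit x hs ht
  refine ⟨fun x t h₀ hT' => ?_, fun x t x' t' h₀ hT' h₀' hT'' => ?_⟩
  · have ht := htime x ⟨h₀, hT'⟩ ⟨le_rfl, hT.le⟩
    rw [sub_zero, abs_of_nonneg h₀] at ht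
    linarith [mul_le_mul_of_nonneg_left (Real.sqrt_le_sqrt hT') hH,
      abs_sub_abs_le_abs_sub (w x t) (w x 0), hinit₀ x]
  · have hx := hw.slabLipschitz hab hlam hT hg hinit x x' t ⟨h₀, hT'⟩
    have ht := htime x' ⟨h₀, hT'⟩ ⟨h₀', hT''⟩
    rw [← Real.sqrt_eq_rpow]
    linarith [abs_sub_le (w x t) (w x' t) (w x' t'), mul_nonneg hH (abs_nonneg (x - x')),
      mul_nonneg hΛ (Real.sqrt_nonneg |t - t'|)]

theorem norm11_le_cauchyConst_mul (hw : IsClassicalSol T a b g w wx wxx wt)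
    (hab : IsAdmissible T lam R a b) (hlam : 0 < lam) (hT : 0 < T) (hg : InvSqrtBounded T G g)
    (hinit₀ : ∀ x, |w x 0| ≤ M) (hinit : ∀ x y, |w x 0 - w y 0| ≤ M * |x - y|) :
    norm11 T w ≤ cauchyConst T R lam * (M + G) :=
  (norm11_le hT.le (hw.inC_of_invSqrtBounded hab hlam hT hg hinit₀ hinit)).trans_eq
    (add_mul _ _ _).symm

theorem invSqrtBounded_defect (hw : IsClassicalSol T a b f w wx wxx wt)
    (hlip : SlabLipschitz T Λ w) (hxx : InvSqrtBounded T H wxx)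
    (hf : SlabBounded T F fun x t => f x t - f' x t)
    (ha : SlabBounded T D fun x t => a x t - a' x t)
    (hb : SlabBounded T D fun x t => b x t - b' x t) :
    InvSqrtBounded T (√T * F + D * H + √T * (D * Λ)) fun x t =>
      f x t - f' x t + (a x t - a' x t) * wxx x t - (b x t - b' x t) * wx x t :=
  ((InvSqrtBounded.of_bounded fun x t ht => hf x t ⟨ht.1.le, ht.2⟩).add
    (hxx.bounded_mul ha)).sub (hw.invSqrtBounded_drift hlip hb)

end IsClassicalSol

end CauchyEstimate

section Dependence

open Set

variable {T R lam N M F F' D : ℝ}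

/-- The Lipschitz constant of a solution `u` with `‖u₀‖₁ ≤ N`, relative to `‖f‖ + 1`. -/
noncomputable def gradientConst (T R lam N : ℝ) : ℝ := lipConst T R lam * (N + √T)

/-- The size of `(a - ā) u_xx - (b - b̄) u_x`, relative to `‖v - v̄‖ (‖f‖ + 1) / √t`. -/
noncomputable def defectConst (T R lam N : ℝ) : ℝ :=
  interiorConst T R lam * (1 + gradientConst T R lam N) + √T * gradientConst T R lam N

/-- The constant `K(R, λ, T, N)` in the continuous dependence estimate. -/
noncomputable def dependenceConst (T R lam N : ℝ) : ℝ :=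
  cauchyConst T R lam * (1 + defectConst T R lam N / √T)

theorem gradientConst_nonneg (hlam : 0 < lam) (hN : 0 ≤ N) : 0 ≤ gradientConst T R lam N :=
  mul_nonneg (lipConst_nonneg hlam) (by positivity)

theorem defectConst_nonneg (hT : 0 ≤ T) (hR : 0 ≤ R) (hlam : 0 < lam) (hN : 0 ≤ N) :
    0 ≤ defectConst T R lam N := by
  have := interiorConst_nonneg hT hR hlam
  have := gradientConst_nonneg (T := T) (R := R) hlam hN
  unfold defectConst
  positivity

theorem dependenceConst_pos (hT : 0 < T) (hR : 0 ≤ R) (hlam : 0 < lam) (hN : 0 ≤ N) :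
    0 < dependenceConst T R lam N := by
  have := cauchyConst_pos (T := T) hR hlam
  have := defectConst_nonneg hT.le hR hlam hN
  unfold dependenceConst
  positivity

theorem continuousOn_dependenceConst (R lam N : ℝ) :
    ContinuousOn (fun T => dependenceConst T R lam N) (Ioi 0) := by
  have hsqrt : ∀ T ∈ Ioi (0 : ℝ), √T ≠ 0 := fun T hT => (Real.sqrt_pos.2 hT).ne'
  unfold dependenceConst cauchyConst defectConst gradientConst timeConst interiorConst absorbRatio
    lipConst
  fun_prop (disch := assumption)

theorem add_defect_le {I k : ℝ} (hT : 0 < T) (hI : 0 ≤ I) (hk : 0 ≤ k) (hM : 0 ≤ M) (hF : 0 ≤ F)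
    (hF' : 0 ≤ F') (hD : 0 ≤ D) :
    M + (√T * F' + D * (I * (F + k * (F + 1))) + √T * (D * (k * (F + 1)))) ≤
      (1 + (I * (1 + k) + √T * k) / √T) * (M + √T * (F + 1) * (F' + D)) := by
  have hS : 0 < √T := Real.sqrt_pos.2 hT
  set κ := I * (1 + k) + √T * k with hκ
  have : 0 ≤ κ := by positivity
  have hsource : √T * F' ≤ √T * (F + 1) * F' := by
    linarith [mul_nonneg hS.le (mul_nonneg hF hF')]
  have hdefect : D * (I * (F + k * (F + 1))) + √T * (D * (k * (F + 1))) ≤ κ * ((F + 1) * D) := by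
    rw [hκ]
    linarith [mul_nonneg hD hI]
  have hscale : κ * ((F + 1) * D) ≤ κ / √T * (M + √T * (F + 1) * (F' + D)) := by
    calc κ * ((F + 1) * D) = κ / √T * (√T * (F + 1) * D) := by field_simp
      _ ≤ κ / √T * (M + √T * (F + 1) * (F' + D)) := by
        gcongr
        linarith [show 0 ≤ √T * (F + 1) * F' by positivity]
  linarith [show 0 ≤ √T * (F + 1) * D by positivity]

variable {a b abar bbar f fbar u ubar : ℝ → ℝ → ℝ} {u0 ubar0 : ℝ → ℝ}

theorem IsSolLin.slabLipschitz (hu : IsSolLin T a b f u0 u) (hT : 0 < T) (hlam : 0 < lam)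
    (hab : memB T R lam a b) (hf : SlabBounded T F f) (hN : norm1 u0 ≤ N) :
    SlabLipschitz T (gradientConst T R lam N * (F + 1)) u := by
  obtain ⟨C, hC⟩ := hu.exists_inC
  have hN₀ : 0 ≤ N := (norm1_eq_norm11 u0 ▸ norm11_nonneg).trans hN
  have hF : 0 ≤ F := hf.nonneg hT.le
  have hlip := hu.isClassicalSol.slabLipschitz hab.isAdmissible hlam hT
    (.of_bounded fun x t ht => hf x t ⟨ht.1.le, ht.2⟩) (hC.initial_bounds hT.le hu.2.2.1).2
  refine fun x y t ht => (hlip x y t ht).trans (mul_le_mul_of_nonneg_right ?_ (abs_nonneg _))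
  rw [gradientConst, mul_assoc]
  refine mul_le_mul_of_nonneg_left ?_ (lipConst_nonneg hlam)
  linarith [mul_nonneg hN₀ hF, Real.sqrt_nonneg T]

theorem IsSolLin.norm11_sub_le (hu : IsSolLin T a b f u0 u)
    (hubar : IsSolLin T abar bbar fbar ubar0 ubar) (hT : 0 < T) (hlam : 0 < lam)
    (hab : memB T R lam a b) (habar : memB T R lam abar bbar)
    (hf : HolderClass {p : ℝ × ℝ | 0 ≤ p.2 ∧ p.2 ≤ T} 1 f)
    (hfbar : HolderClass {p : ℝ × ℝ | 0 ≤ p.2 ∧ p.2 ≤ T} 1 fbar) (hN : norm1 u0 ≤ N) :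
    norm11 T (fun x t => u x t - ubar x t) ≤ dependenceConst T R lam N *
      (norm1 (fun x => u0 x - ubar0 x) + √T * (norm11 T f + 1) *
        (norm11 T (fun x t => f x t - fbar x t) + vDist T a b abar bbar)) := by
  obtain ⟨Cf, hCf⟩ := hf.exists_inC
  obtain ⟨Cfbar, hCfbar⟩ := hfbar.exists_inC
  obtain ⟨Cu, hCu⟩ := hu.exists_inC
  obtain ⟨Cubar, hCubar⟩ := hubar.exists_inC
  have hR : 0 ≤ R := hab.isAdmissible.drift_bounded.nonneg hT.le
  have hN₀ : 0 ≤ N := (norm1_eq_norm11 u0 ▸ norm11_nonneg).trans hN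
  have hlip := hu.slabLipschitz hT hlam hab hCf.inC_norm11.slabBounded hN
  have hsecond := hu.isClassicalSol.invSqrtBounded_second_deriv hu.continuousOn_pdXX
    hab.isAdmissible hlam hab.slabLipschitz hCf.inC_norm11.slabLipschitz hlip
  obtain ⟨hadist, hbdist⟩ := hab.slabBounded_sub habar
  have hdefect := hu.isClassicalSol.invSqrtBounded_defect hlip hsecond
    (hCf.sub hCfbar).inC_norm11.slabBounded hadist hbdist
  obtain ⟨hinit₀, hinit⟩ := (hCu.sub hCubar).initial_bounds (g := fun x => u0 x - ubar0 x) hT.le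
    fun x => by rw [hu.2.2.1, hubar.2.2.1]
  refine ((hu.isClassicalSol.sub hubar.isClassicalSol).norm11_le_cauchyConst_mul
    habar.isAdmissible hlam hT hdefect hinit₀ hinit).trans ?_
  rw [dependenceConst, mul_assoc]
  exact mul_le_mul_of_nonneg_left (add_defect_le hT (interiorConst_nonneg hT.le hR hlam)
    (gradientConst_nonneg hlam hN₀) (norm1_eq_norm11 _ ▸ norm11_nonneg) norm11_nonneg
    norm11_nonneg vDist_nonneg) (cauchyConst_pos hR hlam).le

end Dependence

theorem solution_dependence_general (R lam N : ℝ) (hR : 0 ≤ R) (hlam : 0 < lam) (hN : 0 ≤ N) :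
    ∃ K : ℝ → ℝ, ContinuousOn K (Set.Ioi 0) ∧ ∀ T, 0 < T → 0 < K T ∧
      ∀ a b abar bbar : ℝ → ℝ → ℝ,
        memB T R lam a b → memB T R lam abar bbar →
        ∀ f fbar : ℝ → ℝ → ℝ,
          HolderClass {p : ℝ × ℝ | 0 ≤ p.2 ∧ p.2 ≤ T} 1 f →
          HolderClass {p : ℝ × ℝ | 0 ≤ p.2 ∧ p.2 ≤ T} 1 fbar →
          ∀ u0 ubar0 : ℝ → ℝ, norm1 u0 ≤ N →
            ∀ u ubar : ℝ → ℝ → ℝ,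
              IsSolLin T a b f u0 u → IsSolLin T abar bbar fbar ubar0 ubar →
              norm11 T (fun x t => u x t - ubar x t) ≤
                K T * (norm1 (fun x => u0 x - ubar0 x) +
                  T ^ (1 / 2 : ℝ) * (norm11 T f + 1) *
                    (norm11 T (fun x t => f x t - fbar x t) + vDist T a b abar bbar)) := by
  refine ⟨fun T => dependenceConst T R lam N, continuousOn_dependenceConst R lam N,
    fun T hT => ⟨dependenceConst_pos hT hR hlam hN, ?_⟩⟩
  intro a b abar bbar hab habar f fbar hf hfbar u0 ubar0 hu0 u ubar hu hubar
  rw [← Real.sqrt_eq_rpow]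
  exact hu.norm11_sub_le hubar hT hlam hab habar hf hfbar hu0

/-- Theorem: continuous dependence of the solution of the linear Cauchy
problem on the coefficients, the source term and the initial data. -/
theorem solution_dependence
    (T R lam β N : ℝ) (hT : 0 < T) (hR : 0 < R) (hlam : 0 < lam) (hlR : lam < R)
    (hβ0 : 0 < β) (hβ1 : β < 1) (hN : 0 ≤ N) :
    ∃ K : ℝ, 0 < K ∧
      ∀ a b abar bbar : ℝ → ℝ → ℝ,
        memB T R lam a b → memB T R lam abar bbar →
        ∀ f fbar : ℝ → ℝ → ℝ,
          HolderClass {p : ℝ × ℝ | 0 ≤ p.2 ∧ p.2 ≤ T} 1 f →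
          HolderClass {p : ℝ × ℝ | 0 ≤ p.2 ∧ p.2 ≤ T} 1 fbar →
          ∀ u0 ubar0 : ℝ → ℝ,
            (∃ L, ∀ x x', |u0 x - u0 x'| ≤ L * |x - x'|) →
            (∃ C, ∀ x, |u0 x| ≤ C) →
            (∃ L, ∀ x x', |ubar0 x - ubar0 x'| ≤ L * |x - x'|) →
            (∃ C, ∀ x, |ubar0 x| ≤ C) →
            norm1 u0 ≤ N →
            ∀ u ubar : ℝ → ℝ → ℝ,
              IsSolLin T a b f u0 u → IsSolLin T abar bbar fbar ubar0 ubar →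
              norm11 T (fun x t => u x t - ubar x t) ≤
                K * (vDist T a b abar bbar + vDist T a b abar bbar ^ β +
                  norm1 (fun x => u0 x - ubar0 x) +
                  T ^ (1/2 : ℝ) * (norm11 T f + 1) *
                    (norm11 T (fun x t => f x t - fbar x t) +
                      vDist T a b abar bbar + vDist T a b abar bbar ^ β)) := by
  obtain ⟨K, -, hK⟩ := solution_dependence_general R lam N hR.le hlam hN
  obtain ⟨hKT, hest⟩ := hK T hT
  refine ⟨K T, hKT, fun a b abar bbar hab habar f fbar hf hfbar u0 ubar0 _ _ _ _ hu0 u ubar hu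
    hubar => (hest a b abar bbar hab habar f fbar hf hfbar u0 ubar0 hu0 u ubar hu hubar).trans ?_⟩
  have hD : 0 ≤ vDist T a b abar bbar := vDist_nonneg
  have hDβ := Real.rpow_nonneg hD β
  have hF : 0 ≤ norm11 T f := norm11_nonneg
  refine mul_le_mul_of_nonneg_left (add_le_add ?_ ?_) hKT.le
  · linarith
  · exact mul_le_mul_of_nonneg_left (by linarith) (by positivity)
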